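/- arXiv:1506.07076 — 8 statements merged into one kernel-verified Lean document; each statement's English description precedes it below -/
import Mathlib

section
/- Let G be a bipartite graph, let 0 < ε < 1, and let β > 8ε^{-2}. Let H be a weighted edge-degree-constrained subgraph EDCS(G, β, β−1) of G. Then μ(H) ≥ (1 − ε)·μ(G), where μ(H) denotes the maximum matching size in the (unweighted) support of H and μ(G) the maximum matching size in G. -/
/-- The maximum size of a matching (a finite set of pairwise vertex-disjoint edges)
contained in a set of edges `E`. -/
noncomputable def nuSet {V : Type*} (E : Set (Sym2 V)) : ℕ :=
  sSup {n | ∃ M : Finset (Sym2 V), ↑M ⊆ E ∧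
    (∀ e ∈ M, ∀ f ∈ M, e ≠ f → ∀ v : V, v ∈ e → v ∉ f) ∧ M.card = n}

/-- The weighted degree of `v`: the sum, over edges of `G` incident to `v`,
of the weight `w` of the edge. -/
def wdeg {V : Type*} [Fintype V] [DecidableEq V] (G : SimpleGraph V) [DecidableRel G.Adj]
    (w : Sym2 V → ℕ) (v : V) : ℕ :=
  ∑ u ∈ G.neighborFinset v, w s(v, u)

/- LP duality. The fractional matching `x (uv) = w (uv) / max (d u) (d v)` is supported on `H`, and
on a bipartite graph it rounds to a matching: adding the slacks `1 - ∑ᵤ x (vu)` on the diagonal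
makes `x` doubly stochastic, and each permutation in a Birkhoff decomposition of it moves vertices
only along edges of `H`. In the other direction, lower-bounding degree sums makes `y v = φ (d v)` a
fractional vertex cover of `G` for every ramp `φ` rising from `0` to `1` symmetrically about half
the lower bound. Writing `y v = ∑ᵤ w (vu) (y v / d v)`, an edge `uv` of `H` is charged
`y u / d u + y v / d v` per unit of weight. This exceeds `1 / max (d u) (d v)` by a factor only
slightly larger than `1`: the ramp must be wide for `y u + y v` to be nearly `1`, and narrow for
`d u` and `d v` to be nearly equal when both `y u` and `y v` are positive. -/

open Finset

section Matching

variable {V : Type*} [Finite V]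

theorem card_le_nuSet {E : Set (Sym2 V)} {M : Finset (Sym2 V)} (hME : ↑M ⊆ E)
    (hM : ∀ e ∈ M, ∀ f ∈ M, e ≠ f → ∀ v : V, v ∈ e → v ∉ f) : #M ≤ nuSet E := by
  have := Fintype.ofFinite (Sym2 V)
  refine le_csSup ⟨Fintype.card (Sym2 V), ?_⟩ ⟨M, hME, hM, rfl⟩
  rintro _ ⟨M', -, -, rfl⟩
  exact card_le_univ M'

theorem nuSet_mono {E F : Set (Sym2 V)} (h : E ⊆ F) : nuSet E ≤ nuSet F := by
  refine csSup_le' ?_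
  rintro _ ⟨M, hME, hM, rfl⟩
  exact card_le_nuSet (hME.trans h) hM

theorem card_le_nuSet_of_injOn {E : Set (Sym2 V)} {I : Finset V} {g : V → V}
    (hinj : Set.InjOn g I) (hI : ∀ v ∈ I, g v ∉ I) (hE : ∀ v ∈ I, s(v, g v) ∈ E) :
    #I ≤ nuSet E := by
  classical
  have hdisj : ∀ u ∈ I, ∀ v ∈ I, ∀ a, a ∈ s(u, g u) → a ∈ s(v, g v) → u = v := by
    intro u hu v hv a hau hav
    rcases Sym2.mem_iff.1 hau with rfl | rfl <;> rcases Sym2.mem_iff.1 hav with h | h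
    · exact h
    · exact absurd (h ▸ hu) (hI v hv)
    · exact absurd (h ▸ hv) (hI u hu)
    · exact hinj hu hv h
  have hedge : Set.InjOn (fun v ↦ s(v, g v)) I := fun u hu v hv (huv : s(u, g u) = s(v, g v)) ↦
    hdisj u hu v hv u (Sym2.mem_mk_left _ _) (huv ▸ Sym2.mem_mk_left u (g u))
  rw [← card_image_of_injOn hedge]
  refine card_le_nuSet (fun e he ↦ ?_) fun e he f hf hef a hae haf ↦ ?_
  · obtain ⟨v, hv, rfl⟩ := mem_image.1 (mem_coe.1 he)
    exact hE v hv
  · obtain ⟨u, hu, rfl⟩ := mem_image.1 he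
    obtain ⟨v, hv, rfl⟩ := mem_image.1 hf
    exact hef (by rw [hdisj u hu v hv a hae haf])

theorem card_support_le_mul_nuSet {V α : Type*} [Fintype V] [DecidableEq V] [Fintype α]
    {G : SimpleGraph V} (C : G.Coloring α) {E : Set (Sym2 V)} (hEG : E ⊆ G.edgeSet)
    {σ : Equiv.Perm V} (hσ : ∀ v ∈ σ.support, s(v, σ v) ∈ E) :
    #σ.support ≤ nuSet E * Fintype.card α := by
  classical
  refine card_le_mul_card_image_of_maps_to (f := C) (fun _ _ ↦ mem_univ _) _ fun c _ ↦ ?_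
  refine card_le_nuSet_of_injOn σ.injective.injOn (fun v hv hσv ↦ ?_) fun v hv ↦
    hσ v (mem_filter.1 hv).1
  rw [mem_filter] at hv hσv
  exact C.valid (hEG (hσ v hv.1)) (hv.2.trans hσv.2.symm)

end Matching

/-- A fractional vertex cover: the linear programming dual of a matching. -/
structure IsFractionalVertexCover {V : Type*} (G : SimpleGraph V) (y : V → ℝ) : Prop where
  nonneg : ∀ v, 0 ≤ y v
  one_le_add : ∀ ⦃u v⦄, G.Adj u v → 1 ≤ y u + y v

theorem IsFractionalVertexCover.nuSet_le_sum {V : Type*} [Fintype V] {G : SimpleGraph V}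
    {y : V → ℝ} (hy : IsFractionalVertexCover G y) : (nuSet G.edgeSet : ℝ) ≤ ∑ v, y v := by
  classical
  rw [← Nat.le_floor_iff (sum_nonneg fun v _ ↦ hy.nonneg v)]
  refine csSup_le' ?_
  rintro _ ⟨M, hMG, hM, rfl⟩
  refine Nat.le_floor ?_
  have hdisj : (M : Set (Sym2 V)).PairwiseDisjoint Sym2.toFinset := fun e he f hf hef ↦
    disjoint_left.2 fun v hve hvf ↦
      hM e he f hf hef v (Sym2.mem_toFinset.1 hve) (Sym2.mem_toFinset.1 hvf)
  have hedge : ∀ e ∈ M, 1 ≤ ∑ v ∈ e.toFinset, y v := by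
    intro e he
    induction e using Sym2.ind with | _ u v
    have huv : G.Adj u v := hMG he
    rw [Sym2.toFinset_mk_eq, sum_pair huv.ne]
    exact hy.one_le_add huv
  calc (#M : ℝ) = ∑ _e ∈ M, 1 := by simp
    _ ≤ ∑ e ∈ M, ∑ v ∈ e.toFinset, y v := sum_le_sum hedge
    _ = ∑ v ∈ M.biUnion Sym2.toFinset, y v := (sum_biUnion hdisj).symm
    _ ≤ ∑ v, y v := sum_le_univ_sum_of_nonneg hy.nonneg

/-- The real-weighted counterpart of `wdeg`, used for edge weights and for fractional matchings. -/
def weightedDegree {V : Type*} [Fintype V] (G : SimpleGraph V) [DecidableRel G.Adj]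
    (w : Sym2 V → ℝ) (v : V) : ℝ :=
  ∑ u ∈ G.neighborFinset v, w s(v, u)

section WeightedDegree

variable {V : Type*} [Fintype V] {G : SimpleGraph V} [DecidableRel G.Adj] {w : Sym2 V → ℝ}

theorem weightedDegree_natCast [DecidableEq V] (w : Sym2 V → ℕ) (v : V) :
    weightedDegree G (fun e ↦ w e) v = wdeg G w v := by
  simp [weightedDegree, wdeg]

theorem weightedDegree_nonneg (hw : ∀ e ∈ G.edgeSet, 0 ≤ w e) (v : V) :
    0 ≤ weightedDegree G w v :=
  sum_nonneg fun u hu ↦ hw s(v, u) ((G.mem_neighborFinset v u).1 hu)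

theorem weight_le_weightedDegree (hw : ∀ e ∈ G.edgeSet, 0 ≤ w e) {u v : V} (huv : G.Adj u v) :
    w s(u, v) ≤ weightedDegree G w u :=
  single_le_sum (f := fun v ↦ w s(u, v)) (fun v hv ↦ hw s(u, v) ((G.mem_neighborFinset u v).1 hv))
    ((G.mem_neighborFinset u v).2 huv)

theorem sum_sum_neighborFinset_comm {M : Type*} [AddCommMonoid M] (f : V → V → M) :
    ∑ v, ∑ u ∈ G.neighborFinset v, f v u = ∑ v, ∑ u ∈ G.neighborFinset v, f u v :=
  sum_comm' fun u v ↦ by simp [G.adj_comm]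

theorem two_mul_sum_eq_sum_sum_weight_mul {y : V → ℝ}
    (hy : ∀ v, weightedDegree G w v = 0 → y v = 0) :
    2 * ∑ v, y v = ∑ v, ∑ u ∈ G.neighborFinset v,
      w s(v, u) * (y v / weightedDegree G w v + y u / weightedDegree G w u) := by
  have hsum : ∑ v, ∑ u ∈ G.neighborFinset v, w s(v, u) * (y v / weightedDegree G w v) =
      ∑ v, y v :=
    sum_congr rfl fun v _ ↦ by
      rw [← sum_mul]
      exact mul_div_cancel_of_imp' (hy v)
  have hswap : ∑ v, ∑ u ∈ G.neighborFinset v, w s(v, u) * (y u / weightedDegree G w u) =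
      ∑ v, y v := by
    rw [sum_sum_neighborFinset_comm, ← hsum]
    exact sum_congr rfl fun v _ ↦ sum_congr rfl fun u _ ↦ by rw [Sym2.eq_swap]
  simp only [mul_add, sum_add_distrib, hsum, hswap, two_mul]

end WeightedDegree

/-- A fractional matching: a point of the linear relaxation of the matching problem. Only the
values on the edges of `G` matter. -/
structure IsFractionalMatching {V : Type*} [Fintype V] (G : SimpleGraph V) [DecidableRel G.Adj]
    (x : Sym2 V → ℝ) : Prop where
  nonneg : ∀ e ∈ G.edgeSet, 0 ≤ x e
  weightedDegree_le_one : ∀ v, weightedDegree G x v ≤ 1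

section SlackMatrix

variable {V : Type*} [Fintype V] [DecidableEq V] {G : SimpleGraph V} [DecidableRel G.Adj]
  {x : Sym2 V → ℝ}

/-- The weighted adjacency matrix of `x` with the slack of each vertex put on the diagonal, which
makes it doubly stochastic when `x` is a fractional matching. -/
def slackMatrix (G : SimpleGraph V) [DecidableRel G.Adj] (x : Sym2 V → ℝ) : Matrix V V ℝ :=
  Matrix.diagonal (fun v ↦ 1 - weightedDegree G x v) +
    Matrix.of fun u v ↦ if G.Adj u v then x s(u, v) else 0

theorem slackMatrix_apply_self (v : V) : slackMatrix G x v v = 1 - weightedDegree G x v := by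
  simp [slackMatrix]

theorem slackMatrix_apply_of_ne {u v : V} (huv : u ≠ v) :
    slackMatrix G x u v = if G.Adj u v then x s(u, v) else 0 := by
  simp [slackMatrix, huv]

theorem slackMatrix_comm (u v : V) : slackMatrix G x u v = slackMatrix G x v u := by
  rcases eq_or_ne u v with rfl | huv
  · rfl
  · simp only [slackMatrix_apply_of_ne huv, slackMatrix_apply_of_ne huv.symm, G.adj_comm u v,
      Sym2.eq_swap (a := u) (b := v)]

theorem sum_slackMatrix (u : V) : ∑ v, slackMatrix G x u v = 1 := by
  simp [slackMatrix, sum_add_distrib, Matrix.diagonal_apply, weightedDegree,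
    SimpleGraph.neighborFinset_eq_filter, sum_filter]

theorem IsFractionalMatching.slackMatrix_mem_doublyStochastic (hx : IsFractionalMatching G x) :
    slackMatrix G x ∈ doublyStochastic ℝ V := by
  refine mem_doublyStochastic_iff_sum.2 ⟨fun u v ↦ ?_, sum_slackMatrix, fun v ↦ ?_⟩
  · rcases eq_or_ne u v with rfl | huv
    · rw [slackMatrix_apply_self]
      exact sub_nonneg.2 (hx.weightedDegree_le_one u)
    · rw [slackMatrix_apply_of_ne huv]
      split_ifs with hadj
      exacts [hx.nonneg _ hadj, le_rfl]
  · simp only [slackMatrix_comm _ v, sum_slackMatrix]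

theorem sum_one_sub_permMatrix_apply_self (σ : Equiv.Perm V) :
    ∑ v, (1 - σ.permMatrix ℝ v v) = #σ.support := by
  have hentry : ∀ v, 1 - σ.permMatrix ℝ v v = if v ∈ σ.support then 1 else 0 := fun v ↦ by
    by_cases hv : σ v = v <;> simp [Equiv.Perm.permMatrix, PEquiv.toMatrix_apply, hv]
  simp only [hentry, sum_boole, filter_univ_mem]

end SlackMatrix

theorem IsFractionalMatching.sum_weightedDegree_le {V α : Type*} [Fintype V] [Fintype α]
    {G : SimpleGraph V} [DecidableRel G.Adj] (C : G.Coloring α) {x : Sym2 V → ℝ}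
    (hx : IsFractionalMatching G x) :
    ∑ v, weightedDegree G x v ≤ nuSet {e | e ∈ G.edgeSet ∧ x e ≠ 0} * Fintype.card α := by
  classical
  obtain ⟨c, hc, hc1, hcx⟩ :=
    exists_eq_sum_perm_of_mem_doublyStochastic hx.slackMatrix_mem_doublyStochastic
  have hentry : ∀ u v, slackMatrix G x u v = ∑ σ, c σ * σ.permMatrix ℝ u v := fun u v ↦ by
    simp [← hcx, Matrix.sum_apply]
  have hmove : ∀ σ, c σ ≠ 0 → ∀ v ∈ σ.support, s(v, σ v) ∈ {e | e ∈ G.edgeSet ∧ x e ≠ 0} := by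
    intro σ hσ v hv
    have hpos : 0 < slackMatrix G x v (σ v) := by
      rw [hentry]
      refine sum_pos' (fun τ _ ↦ mul_nonneg (hc τ) ?_) ⟨σ, mem_univ _, ?_⟩
      · simp only [Equiv.Perm.permMatrix, PEquiv.toMatrix_apply]
        positivity
      · simpa [Equiv.Perm.permMatrix, PEquiv.toMatrix_apply] using (hc σ).lt_of_ne' hσ
    rw [slackMatrix_apply_of_ne (Equiv.Perm.mem_support.1 hv).symm] at hpos
    split_ifs at hpos with hadj
    exacts [⟨hadj, hpos.ne'⟩, absurd hpos (lt_irrefl 0)]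
  calc ∑ v, weightedDegree G x v = ∑ v, ∑ σ, c σ * (1 - σ.permMatrix ℝ v v) :=
        sum_congr rfl fun v _ ↦ by
          simp only [mul_sub, mul_one, sum_sub_distrib, hc1, ← hentry, slackMatrix_apply_self,
            sub_sub_cancel]
    _ = ∑ σ, c σ * #σ.support := by
        rw [sum_comm]
        simp only [← mul_sum, sum_one_sub_permMatrix_apply_self]
    _ ≤ ∑ σ, c σ * (nuSet {e | e ∈ G.edgeSet ∧ x e ≠ 0} * Fintype.card α) := by
        refine sum_le_sum fun σ _ ↦ ?_
        rcases eq_or_ne (c σ) 0 with hσ | hσ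
        · simp [hσ]
        · refine mul_le_mul_of_nonneg_left ?_ (hc σ)
          exact_mod_cast card_support_le_mul_nuSet C (fun e he ↦ he.1) (hmove σ hσ)
    _ = nuSet {e | e ∈ G.edgeSet ∧ x e ≠ 0} * Fintype.card α := by rw [← sum_mul, hc1, one_mul]

/-- The fractional matching associated with the edge weights `w`: each edge is scaled by the larger
weighted degree of its ends. -/
noncomputable def normalizedWeight {V : Type*} [Fintype V] (G : SimpleGraph V) [DecidableRel G.Adj]
    (w : Sym2 V → ℝ) (e : Sym2 V) : ℝ :=
  w e / (e.map (weightedDegree G w)).sup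

section NormalizedWeight

variable {V : Type*} [Fintype V] {G : SimpleGraph V} [DecidableRel G.Adj] {w : Sym2 V → ℝ}

theorem normalizedWeight_mk (u v : V) : normalizedWeight G w s(u, v) =
    w s(u, v) / max (weightedDegree G w u) (weightedDegree G w v) :=
  rfl

theorem isFractionalMatching_normalizedWeight (hw : ∀ e ∈ G.edgeSet, 0 ≤ w e) :
    IsFractionalMatching G (normalizedWeight G w) where
  nonneg e he := by
    induction e using Sym2.ind with | _ u v
    exact div_nonneg (hw _ he) (le_max_of_le_left (weightedDegree_nonneg hw u))
  weightedDegree_le_one v := by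
    have hle : ∀ u ∈ G.neighborFinset v,
        normalizedWeight G w s(v, u) ≤ w s(v, u) / weightedDegree G w v := by
      intro u hu
      have hvu : G.Adj v u := (G.mem_neighborFinset v u).1 hu
      rw [normalizedWeight_mk]
      rcases (hw s(v, u) hvu).eq_or_lt with h0 | hpos
      · simp [← h0]
      · exact div_le_div_of_nonneg_left hpos.le (hpos.trans_le (weight_le_weightedDegree hw hvu))
          (le_max_left _ _)
    calc weightedDegree G (normalizedWeight G w) v
        ≤ ∑ u ∈ G.neighborFinset v, w s(v, u) / weightedDegree G w v := sum_le_sum hle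
      _ = weightedDegree G w v / weightedDegree G w v := (sum_div _ _ _).symm
      _ ≤ 1 := div_self_le_one _

theorem sum_weightedDegree_normalizedWeight_le (hbip : G.Colorable 2)
    (hw : ∀ e ∈ G.edgeSet, 0 ≤ w e) :
    ∑ v, weightedDegree G (normalizedWeight G w) v ≤
      2 * nuSet {e | e ∈ G.edgeSet ∧ w e ≠ 0} := by
  classical
  obtain ⟨C⟩ := hbip
  have hsupp : {e | e ∈ G.edgeSet ∧ normalizedWeight G w e ≠ 0} ⊆
      {e | e ∈ G.edgeSet ∧ w e ≠ 0} := fun e he ↦ ⟨he.1, (div_ne_zero_iff.1 he.2).1⟩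
  calc ∑ v, weightedDegree G (normalizedWeight G w) v
      ≤ nuSet {e | e ∈ G.edgeSet ∧ normalizedWeight G w e ≠ 0} * Fintype.card (Fin 2) :=
        (isFractionalMatching_normalizedWeight hw).sum_weightedDegree_le C
    _ ≤ nuSet {e | e ∈ G.edgeSet ∧ w e ≠ 0} * 2 := by
        rw [Fintype.card_fin, Nat.cast_ofNat]
        gcongr
        exact nuSet_mono hsupp
    _ = _ := mul_comm _ _

theorem sum_le_mul_nuSet (hbip : G.Colorable 2) (hw : ∀ e ∈ G.edgeSet, 0 ≤ w e) {y : V → ℝ}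
    {K : ℝ} (hK : 0 ≤ K) (hy : ∀ v, weightedDegree G w v = 0 → y v = 0)
    (hcharge : ∀ u v, G.Adj u v → w s(u, v) ≠ 0 →
      y u / weightedDegree G w u + y v / weightedDegree G w v ≤
        K / max (weightedDegree G w u) (weightedDegree G w v)) :
    ∑ v, y v ≤ K * nuSet {e | e ∈ G.edgeSet ∧ w e ≠ 0} := by
  have hedge : ∀ v, ∀ u ∈ G.neighborFinset v,
      w s(v, u) * (y v / weightedDegree G w v + y u / weightedDegree G w u) ≤
        K * normalizedWeight G w s(v, u) := by
    intro v u hu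
    have hvu : G.Adj v u := (G.mem_neighborFinset v u).1 hu
    rw [normalizedWeight_mk, mul_div_left_comm]
    rcases eq_or_ne (w s(v, u)) 0 with h0 | h0
    · simp [h0]
    · exact mul_le_mul_of_nonneg_left (hcharge v u hvu h0) (hw _ hvu)
  have hdouble : 2 * ∑ v, y v ≤ 2 * (K * nuSet {e | e ∈ G.edgeSet ∧ w e ≠ 0}) :=
    calc 2 * ∑ v, y v
        ≤ ∑ v, ∑ u ∈ G.neighborFinset v, K * normalizedWeight G w s(v, u) := by
          rw [two_mul_sum_eq_sum_sum_weight_mul hy]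
          exact sum_le_sum fun v _ ↦ sum_le_sum (hedge v)
      _ = K * ∑ v, weightedDegree G (normalizedWeight G w) v := by
          simp only [weightedDegree, mul_sum]
      _ ≤ K * (2 * nuSet {e | e ∈ G.edgeSet ∧ w e ≠ 0}) :=
          mul_le_mul_of_nonneg_left (sum_weightedDegree_normalizedWeight_le hbip hw) hK
      _ = _ := mul_left_comm _ _ _
  linarith

end NormalizedWeight

/-- The piecewise linear function that rises from `0` to `1` on the interval of length `n` centred
at `c / 2`; applied to degrees, it turns a lower bound `c` on degree sums into a fractional vertex
cover. -/
noncomputable def ramp (c n a : ℝ) : ℝ :=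
  max 0 (min 1 ((n + 2 * a - c) / (2 * n)))

section Ramp

variable {c n a b β : ℝ}

theorem ramp_nonneg (c n a : ℝ) : 0 ≤ ramp c n a :=
  le_max_left _ _

theorem ramp_le_one (c n a : ℝ) : ramp c n a ≤ 1 :=
  max_le zero_le_one (min_le_left _ _)

theorem ramp_zero (hn : 0 < n) (hnc : n ≤ c) : ramp c n 0 = 0 :=
  max_eq_left (min_le_of_right_le (div_nonpos_of_nonpos_of_nonneg (by linarith) (by linarith)))

theorem ramp_mono (hn : 0 < n) : Monotone (ramp c n) := fun a b hab ↦ by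
  unfold ramp
  gcongr

theorem ramp_le_of_pos (h : 0 < ramp c n a) : ramp c n a ≤ (n + 2 * a - c) / (2 * n) := by
  rw [ramp, lt_max_iff, or_iff_right (lt_irrefl _)] at h
  rw [ramp, max_eq_right h.le]
  exact min_le_right _ _

theorem one_le_ramp_add_ramp (hn : 0 < n) (hab : c ≤ a + b) : 1 ≤ ramp c n a + ramp c n b := by
  have hsum : 1 ≤ (n + 2 * a - c) / (2 * n) + (n + 2 * b - c) / (2 * n) := by
    rw [← add_div, one_le_div (by positivity)]
    linarith
  simp only [ramp]
  grind

theorem ramp_add_ramp_le (hn : 0 < n) (hba : b ≤ a) (hab : a + b ≤ β) (hb : 0 < ramp c n b) :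
    ramp c n a + ramp c n b ≤ 1 + (β - c) / n :=
  calc ramp c n a + ramp c n b ≤ (n + 2 * a - c) / (2 * n) + (n + 2 * b - c) / (2 * n) :=
        add_le_add (ramp_le_of_pos (hb.trans_le (ramp_mono hn hba))) (ramp_le_of_pos hb)
    _ = 1 + (a + b - c) / n := by field_simp; ring
    _ ≤ 1 + (β - c) / n := by gcongr

theorem ramp_mul_sub_div_le (hn : 0 < n) (hnc : n < c) (hab : a + b ≤ β)
    (hb : 0 < ramp c n b) :
    ramp c n b * (a - b) / b ≤ (n + (β - c)) ^ 2 / (4 * n * (c - n)) := by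
  set p := ramp c n b
  have hp : 2 * n * p ≤ n + 2 * b - c := by
    have := ramp_le_of_pos hb
    rwa [le_div_iff₀' (by positivity)] at this
  have hcb : (c - n) / 2 ≤ b := by nlinarith
  have hquad : p * (a - b) ≤ (n + (β - c)) ^ 2 / (8 * n) := by
    rw [le_div_iff₀ (by positivity)]
    have hpab : p * (a - b) ≤ p * (n + (β - c) - 2 * n * p) :=
      mul_le_mul_of_nonneg_left (by linarith) hb.le
    nlinarith [sq_nonneg (n + (β - c) - 4 * n * p)]
  have : 0 < c - n := sub_pos.2 hnc
  calc p * (a - b) / b ≤ (n + (β - c)) ^ 2 / (8 * n) / ((c - n) / 2) := by gcongr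
    _ = _ := by rw [div_div]; ring_nf

theorem ramp_div_add_ramp_div_le (hn : 0 < n) (hnc : n < c) (hcβ : c ≤ β) (ha : 0 < a)
    (hb : 0 < b) (hab : a + b ≤ β) :
    ramp c n a / a + ramp c n b / b ≤
      (1 + (β - c) / n + (n + (β - c)) ^ 2 / (4 * n * (c - n))) / max a b := by
  wlog hba : b ≤ a generalizing a b
  · rw [add_comm (_ / a), max_comm]
    exact this hb ha (by linarith) (le_of_not_ge hba)
  have : 0 < c - n := sub_pos.2 hnc
  have : 0 ≤ β - c := sub_nonneg.2 hcβ
  rw [max_eq_left hba, show ramp c n a / a + ramp c n b / b =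
    (ramp c n a + ramp c n b + ramp c n b * (a - b) / b) / a by field_simp; ring]
  refine div_le_div_of_nonneg_right ?_ ha.le
  rcases (ramp_nonneg c n b).eq_or_lt with h0 | hpos
  · have : 0 ≤ (β - c) / n + (n + (β - c)) ^ 2 / (4 * n * (c - n)) := by positivity
    rw [← h0, zero_mul, zero_div]
    linarith [ramp_le_one c n a]
  · exact add_le_add (ramp_add_ramp_le hn hba hab hpos) (ramp_mul_sub_div_le hn hnc hab hpos)

end Ramp

/-- The edge-degree constraints of an EDCS, for nonnegative real edge weights: `w` encodes the
weighted subgraph `H`, whose edges are the edges of `G` of nonzero weight. -/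
structure IsWeightedEDCS {V : Type*} [Fintype V] (G : SimpleGraph V) [DecidableRel G.Adj]
    (w : Sym2 V → ℝ) (β β' : ℝ) : Prop where
  nonneg : ∀ e ∈ G.edgeSet, 0 ≤ w e
  add_le : ∀ ⦃u v⦄, G.Adj u v → w s(u, v) ≠ 0 →
    weightedDegree G w u + weightedDegree G w v ≤ β
  le_add : ∀ ⦃u v⦄, G.Adj u v → β' ≤ weightedDegree G w u + weightedDegree G w v

namespace IsWeightedEDCS

variable {V : Type*} [Fintype V] {G : SimpleGraph V} [DecidableRel G.Adj] {w : Sym2 V → ℝ}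
  {β β' c n : ℝ}

theorem mono_right (hw : IsWeightedEDCS G w β β') (hc : c ≤ β') : IsWeightedEDCS G w β c where
  nonneg := hw.nonneg
  add_le := hw.add_le
  le_add _ _ huv := hc.trans (hw.le_add huv)

theorem isFractionalVertexCover_ramp (hw : IsWeightedEDCS G w β β') (hn : 0 < n) :
    IsFractionalVertexCover G fun v ↦ ramp β' n (weightedDegree G w v) where
  nonneg _ := ramp_nonneg _ _ _
  one_le_add _ _ huv := one_le_ramp_add_ramp hn (hw.le_add huv)

theorem nuSet_le_mul_nuSet (hbip : G.Colorable 2) (hw : IsWeightedEDCS G w β β') (hββ' : β' ≤ β)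
    (hn : 0 < n) (hnβ' : n < β') :
    (nuSet G.edgeSet : ℝ) ≤ (1 + (β - β') / n + (n + (β - β')) ^ 2 / (4 * n * (β' - n))) *
      nuSet {e | e ∈ G.edgeSet ∧ w e ≠ 0} := by
  have : 0 ≤ β - β' := sub_nonneg.2 hββ'
  have : 0 < β' - n := sub_pos.2 hnβ'
  refine (hw.isFractionalVertexCover_ramp hn).nuSet_le_sum.trans
    (sum_le_mul_nuSet hbip hw.nonneg (by positivity) (fun v hv ↦ ?_) fun u v huv h0 ↦ ?_)
  · simp only [hv, ramp_zero hn hnβ'.le]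
  · have hwpos : 0 < w s(u, v) := (hw.nonneg _ huv).lt_of_ne' h0
    exact ramp_div_add_ramp_div_le hn hnβ' hββ'
      (hwpos.trans_le (weight_le_weightedDegree hw.nonneg huv))
      (hwpos.trans_le (Sym2.eq_swap ▸ weight_le_weightedDegree hw.nonneg huv.symm))
      (hw.add_le huv h0)

end IsWeightedEDCS

theorem stmt1_general {V : Type*} [Fintype V] {G : SimpleGraph V} [DecidableRel G.Adj]
    (hbip : G.Colorable 2) {ε β β' : ℝ} (hε0 : 0 < ε) (hε1 : ε < 1) (hβ : 0 < β)
    (hβ' : (1 - ε ^ 2 / 3) * β ≤ β') {w : Sym2 V → ℝ} (hw : IsWeightedEDCS G w β β') :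
    (1 - ε) * nuSet G.edgeSet ≤ nuSet {e | e ∈ G.edgeSet ∧ w e ≠ 0} := by
  have h1ε : 0 < 1 - ε := sub_pos.2 hε1
  -- With lower bound `(1 - ε² / 3) β` and width `2 ε β / 3`, the loss does not depend on `β`.
  have hgap : (1 - ε ^ 2 / 3) * β - 2 * ε * β / 3 = β * ((3 + ε) * (1 - ε)) / 3 := by ring
  have hwidth : 2 * ε * β / 3 < (1 - ε ^ 2 / 3) * β :=
    sub_pos.1 (hgap ▸ by positivity)
  have hloss : (1 - ε) * (1 + (β - (1 - ε ^ 2 / 3) * β) / (2 * ε * β / 3) +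
      (2 * ε * β / 3 + (β - (1 - ε ^ 2 / 3) * β)) ^ 2 /
        (4 * (2 * ε * β / 3) * ((1 - ε ^ 2 / 3) * β - 2 * ε * β / 3))) ≤ 1 :=
    calc _ = (1 - ε) * (1 + ε / 2) + ε * (2 + ε) ^ 2 / (8 * (3 + ε)) := by
          rw [hgap]
          field_simp
          ring
      _ ≤ 1 := by
          rw [← le_sub_iff_add_le', div_le_iff₀ (by positivity)]
          nlinarith [mul_pos hε0 hε0, mul_pos (mul_pos hε0 hε0) hε0]
  calc (1 - ε) * nuSet G.edgeSet ≤ (1 - ε) * (_ * nuSet {e | e ∈ G.edgeSet ∧ w e ≠ 0}) :=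
        mul_le_mul_of_nonneg_left ((hw.mono_right hβ').nuSet_le_mul_nuSet hbip
          (by nlinarith [sq_nonneg ε]) (by positivity) hwidth) h1ε.le
    _ ≤ nuSet {e | e ∈ G.edgeSet ∧ w e ≠ 0} := by
        rw [← mul_assoc]
        exact mul_le_of_le_one_left (Nat.cast_nonneg _) hloss

theorem isWeightedEDCS_natCast {V : Type*} [Fintype V] [DecidableEq V] {G : SimpleGraph V}
    [DecidableRel G.Adj] {w : Sym2 V → ℕ} {β β' : ℝ}
    (hP1 : ∀ u v : V, G.Adj u v → w s(u, v) ≠ 0 → (wdeg G w u + wdeg G w v : ℝ) ≤ β)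
    (hP2 : ∀ u v : V, G.Adj u v → (wdeg G w u + wdeg G w v : ℝ) ≥ β') :
    IsWeightedEDCS G (fun e ↦ w e) β β' where
  nonneg e _ := Nat.cast_nonneg (w e)
  add_le u v huv h0 := by
    simpa only [weightedDegree_natCast] using hP1 u v huv (Nat.cast_ne_zero.1 h0)
  le_add u v huv := by
    simpa only [weightedDegree_natCast] using hP2 u v huv

theorem one_sub_sq_div_three_mul_le {ε β : ℝ} (hε : 0 < ε) (hβ : 3 * ε⁻¹ ^ 2 ≤ β) :
    (1 - ε ^ 2 / 3) * β ≤ β - 1 := by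
  rw [inv_pow, ← div_eq_mul_inv, div_le_iff₀ (by positivity)] at hβ
  linarith

/-- Let `G` be a bipartite graph, `0 < ε < 1`, `β > 8ε⁻²`, and let the weight
function `w` (with `H` = support of `w`) be a weighted EDCS(G, β, β−1).
Then `μ(H) ≥ (1 − ε)·μ(G)`. -/
theorem stmt1 {V : Type*} [Fintype V] [DecidableEq V] (G : SimpleGraph V) [DecidableRel G.Adj]
    (hbip : G.Colorable 2)
    (ε β : ℝ) (hε0 : 0 < ε) (hε1 : ε < 1) (hβ : β > 8 * ε⁻¹ ^ 2)
    (w : Sym2 V → ℕ) (hsupp : ∀ e, w e ≠ 0 → e ∈ G.edgeSet)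
    (hP1 : ∀ u v : V, G.Adj u v → w s(u, v) ≠ 0 →
      (wdeg G w u + wdeg G w v : ℝ) ≤ β)
    (hP2 : ∀ u v : V, G.Adj u v → (wdeg G w u + wdeg G w v : ℝ) ≥ β - 1) :
    (nuSet {e | e ∈ G.edgeSet ∧ w e ≠ 0} : ℝ) ≥ (1 - ε) * nuSet G.edgeSet := by
  simpa using stmt1_general hbip hε0 hε1 (hβ.trans' (by positivity))
    (one_sub_sq_div_three_mul_le hε0 (hβ.le.trans' (by gcongr; norm_num)))
    (isWeightedEDCS_natCast hP1 hP2)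
end

section
/- Let G = (V, E_G) be a bipartite graph and let H = (V, E_H) be an unweighted edge-degree-constrained subgraph EDCS(G, β, β(1−λ)) for some 0 < λ < 1. Then there exist disjoint sets of vertices S and T such that: (1) |T| = μ(H); (2) |S| = 2(μ(G) − μ(H)); (3) every edge of H incident to a vertex of S has its other endpoint in T; and (4) the sum of the degrees d_H(s) over s ∈ S is at least |S|·β(1−λ)/2 (i.e., the average degree of vertices of S in H is at least β(1−λ)/2). -/
/-- The degree of `v` in the simple graph `H`. -/
noncomputable def sdeg {V : Type*} (H : SimpleGraph V) (v : V) : ℕ :=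
  (H.neighborSet v).ncard

/-!
By Kőnig's theorem `H` has a vertex cover `T` of size `μ(H)`. At most `|T|` edges of a maximum
matching of `G` meet `T`, so `μ(G) - μ(H)` of its edges avoid `T`; let `S` be the set of their
endpoints. As `T` covers `H`, the `H`-neighbors of a vertex of `S` lie in `T`, and the chosen
matching edges are not in `H`, so the degree sum of the endpoints of each is at least `β(1 - λ)`.

Kőnig's theorem follows from Hall's: a set of vertices of one color in a minimum cover `T` cannot
have fewer neighbors outside `T` than elements, or exchanging it for these neighbors would give a
smaller cover. Vertices of different colors have no common neighbors, so Hall's condition holds for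
matching all of `T` into its complement.
-/

section

open Finset Function

variable {V : Type*} {G H : SimpleGraph V} {E F : Set (Sym2 V)} {M : Finset (Sym2 V)}
  {T X Y : Finset V}

/-- A matching, encoded as a finite set of pairwise vertex-disjoint edges; the body is copied from
`nuSet`, so that `nuSet E` is by definition the supremum of the sizes of matchings in `E`. -/
def IsEdgeMatching (M : Finset (Sym2 V)) : Prop :=
  ∀ e ∈ M, ∀ f ∈ M, e ≠ f → ∀ v : V, v ∈ e → v ∉ f

namespace IsEdgeMatching

lemma mono {N : Finset (Sym2 V)} (hM : IsEdgeMatching M) (hNM : N ⊆ M) : IsEdgeMatching N :=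
  fun e he f hf ↦ hM e (hNM he) f (hNM hf)

lemma pairwiseDisjoint_toFinset [DecidableEq V] (hM : IsEdgeMatching M) :
    (M : Set (Sym2 V)).PairwiseDisjoint Sym2.toFinset := by
  intro e he f hf hef
  refine disjoint_left.2 fun v hve hvf ↦ ?_
  exact hM e he f hf hef v (Sym2.mem_toFinset.1 hve) (Sym2.mem_toFinset.1 hvf)

lemma card_biUnion_toFinset [DecidableEq V] (hM : IsEdgeMatching M) (hMG : ↑M ⊆ G.edgeSet) :
    #(M.biUnion Sym2.toFinset) = 2 * #M := by
  rw [card_biUnion hM.pairwiseDisjoint_toFinset, sum_const_nat (m := 2), mul_comm]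
  exact fun e he ↦ e.card_toFinset_of_not_isDiag (G.not_isDiag_of_mem_edgeSet (hMG he))

lemma card_nsmul_le_sum_biUnion_toFinset {R : Type*} [AddCommMonoid R] [PartialOrder R]
    [IsOrderedAddMonoid R] [DecidableEq V] (hM : IsEdgeMatching M) (hMG : ↑M ⊆ G.edgeSet)
    {w : V → R} {b : R} (hb : ∀ u v, s(u, v) ∈ M → b ≤ w u + w v) :
    #M • b ≤ ∑ v ∈ M.biUnion Sym2.toFinset, w v := by
  rw [sum_biUnion hM.pairwiseDisjoint_toFinset]
  refine card_nsmul_le_sum _ _ _ fun e he ↦ ?_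
  induction e with
  | _ u v =>
    have huv : G.Adj u v := hMG he
    rw [Sym2.toFinset_mk_eq, sum_pair huv.ne]
    exact hb u v he

lemma card_filter_not_disjoint_le [DecidableEq V] (hM : IsEdgeMatching M) (T : Finset V) :
    #{e ∈ M | ¬Disjoint e.toFinset T} ≤ #T := by
  have hdisj : (({e ∈ M | ¬Disjoint e.toFinset T} : Finset (Sym2 V)) :
      Set (Sym2 V)).PairwiseDisjoint fun e ↦ e.toFinset ∩ T :=
    ((hM.mono (filter_subset _ _)).pairwiseDisjoint_toFinset).mono fun _ ↦ inter_subset_left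
  calc #{e ∈ M | ¬Disjoint e.toFinset T}
      ≤ #({e ∈ M | ¬Disjoint e.toFinset T}.biUnion fun e ↦ e.toFinset ∩ T) :=
        card_le_card_biUnion hdisj fun e he ↦ not_disjoint_iff_nonempty_inter.1 (mem_filter.1 he).2
    _ ≤ #T := card_le_card (biUnion_subset.2 fun _ _ ↦ inter_subset_right)

end IsEdgeMatching

lemma notMem_edgeSet_of_isVertexCover (hT : H.IsVertexCover T) {e : Sym2 V}
    (he : ∀ v ∈ e, v ∉ T) : e ∉ H.edgeSet := by
  induction e with
  | _ u v =>
    exact fun huv ↦ (hT huv).elim (he u (Sym2.mem_mk_left u v)) (he v (Sym2.mem_mk_right u v))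

section Finite

variable [Finite V]

lemma bddAbove_card_isEdgeMatching (E : Set (Sym2 V)) :
    BddAbove {n | ∃ M : Finset (Sym2 V), ↑M ⊆ E ∧ IsEdgeMatching M ∧ #M = n} := by
  have := Fintype.ofFinite (Sym2 V)
  refine ⟨Fintype.card (Sym2 V), ?_⟩
  rintro _ ⟨M, -, -, rfl⟩
  exact card_le_univ M

lemma IsEdgeMatching.card_le_nuSet (hM : IsEdgeMatching M) (hME : ↑M ⊆ E) : #M ≤ nuSet E :=
  le_csSup (bddAbove_card_isEdgeMatching E) ⟨M, hME, hM, rfl⟩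

lemma exists_isEdgeMatching_card_eq_nuSet (E : Set (Sym2 V)) :
    ∃ M : Finset (Sym2 V), ↑M ⊆ E ∧ IsEdgeMatching M ∧ #M = nuSet E :=
  Nat.sSup_mem
    (s := {n | ∃ M : Finset (Sym2 V), (M : Set (Sym2 V)) ⊆ E ∧ IsEdgeMatching M ∧ #M = n})
    ⟨0, ∅, by simp, by simp [IsEdgeMatching], by simp⟩ (bddAbove_card_isEdgeMatching E)

lemma nuSet_mono_s2 (hEF : E ⊆ F) : nuSet E ≤ nuSet F := by
  obtain ⟨M, hME, hM, hcard⟩ := exists_isEdgeMatching_card_eq_nuSet E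
  exact hcard ▸ hM.card_le_nuSet (hME.trans hEF)

lemma exists_isEdgeMatching_avoiding (E : Set (Sym2 V)) (T : Finset V) :
    ∃ N : Finset (Sym2 V), ↑N ⊆ E ∧ IsEdgeMatching N ∧ (∀ e ∈ N, ∀ v ∈ e, v ∉ T) ∧
      #N = nuSet E - #T := by
  classical
  obtain ⟨M, hME, hM, hcard⟩ := exists_isEdgeMatching_card_eq_nuSet E
  have hmeet := hM.card_filter_not_disjoint_le T
  have hsplit := card_filter_add_card_filter_not (s := M) fun e ↦ Disjoint e.toFinset T
  obtain ⟨N, hN, hNcard⟩ := exists_subset_card_eq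
    (s := {e ∈ M | Disjoint e.toFinset T}) (n := nuSet E - #T) (by omega)
  have hNM : N ⊆ M := hN.trans (filter_subset _ _)
  refine ⟨N, fun e he ↦ hME (hNM he), hM.mono hNM, fun e he v hv ↦ ?_, hNcard⟩
  exact disjoint_left.1 (mem_filter.1 (hN he)).2 (Sym2.mem_toFinset.2 hv)

lemma nuSet_le_card_of_isVertexCover (hT : H.IsVertexCover T) : nuSet H.edgeSet ≤ #T := by
  obtain ⟨N, hNH, -, hNT, hcard⟩ := exists_isEdgeMatching_avoiding H.edgeSet T
  have hN : N = ∅ := eq_empty_of_forall_notMem fun e he ↦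
    notMem_edgeSet_of_isVertexCover hT (hNT e he) (hNH he)
  rw [hN, card_empty] at hcard
  omega

lemma card_le_nuSet_of_injective {f : T → V} (hf : Injective f)
    (hadj : ∀ t : T, H.Adj t (f t)) (hout : ∀ t, f t ∉ T) : #T ≤ nuSet H.edgeSet := by
  classical
  have hinj : Injective fun t : T ↦ s(↑t, f t) := fun s t hst ↦
    (Sym2.eq_iff.1 hst).elim (fun h ↦ Subtype.ext h.1) fun h ↦ absurd (h.1 ▸ s.2) (hout t)
  rw [← card_attach, ← card_image_of_injective _ hinj]
  refine IsEdgeMatching.card_le_nuSet (fun e he e' he' hne v hve hve' ↦ ?_) fun e he ↦ ?_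
  · obtain ⟨s, -, rfl⟩ := mem_image.1 he
    obtain ⟨t, -, rfl⟩ := mem_image.1 he'
    suffices hst : s = t from hne (hst ▸ rfl)
    rcases Sym2.mem_iff.1 hve with rfl | rfl <;> rcases Sym2.mem_iff.1 hve' with h | h
    · exact Subtype.ext h
    · exact absurd (h ▸ s.2) (hout t)
    · exact absurd (h ▸ t.2) (hout s)
    · exact hf h
  · obtain ⟨t, -, rfl⟩ := mem_image.1 he
    exact hadj t

end Finite

lemma card_le_card_of_isIndepSet_of_minimalFor
    (hT : MinimalFor (fun T : Finset V ↦ H.IsVertexCover T) card T) (hXT : X ⊆ T)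
    (hX : H.IsIndepSet X) (hY : ∀ x ∈ X, ∀ v ∉ T, H.Adj x v → v ∈ Y) : #X ≤ #Y := by
  classical
  by_contra! hlt
  have hlt' : #(T \ X ∪ Y) < #T := by
    have := card_union_le (T \ X) Y
    have := card_sdiff_add_card_eq_card hXT
    omega
  refine hT.not_prop_of_lt hlt' fun u v huv ↦ ?_
  have hcov := hT.prop huv
  have hind : u ∈ X → v ∉ X := fun hu hv ↦ hX hu hv huv.ne huv
  have hYu : v ∈ X → u ∉ T → u ∈ Y := fun hv hu ↦ hY v hv u hu huv.symm
  have hYv : u ∈ X → v ∉ T → v ∈ Y := fun hu hv ↦ hY u hu v hv huv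
  simp only [mem_coe, mem_union, mem_sdiff] at hcov ⊢
  tauto

lemma card_le_card_of_colorable_two_of_minimalFor (hH : H.Colorable 2)
    (hT : MinimalFor (fun T : Finset V ↦ H.IsVertexCover T) card T) (hXT : X ⊆ T)
    (hY : ∀ x ∈ X, ∀ v ∉ T, H.Adj x v → v ∈ Y) : #X ≤ #Y := by
  obtain ⟨c⟩ := hH
  have hcolor (i : Fin 2) : #{x ∈ X | c x = i} ≤ #{y ∈ Y | c y ≠ i} := by
    refine card_le_card_of_isIndepSet_of_minimalFor hT ((filter_subset _ _).trans hXT) ?_ ?_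
    · intro x hx y hy _ hxy
      exact c.valid hxy ((mem_filter.1 hx).2.trans (mem_filter.1 hy).2.symm)
    · intro x hx v hv hxv
      obtain ⟨hxX, rfl⟩ := mem_filter.1 hx
      exact mem_filter.2 ⟨hY x hxX v hv hxv, (c.valid hxv).symm⟩
  have hne (v : V) : c v ≠ 1 ↔ c v = 0 := by omega
  have hzero := hcolor 0
  have hone := hcolor 1
  have hsplitX := card_filter_add_card_filter_not (s := X) (c · = 1)
  have hsplitY := card_filter_add_card_filter_not (s := Y) (c · = 0)
  simp only [← ne_eq, hne] at hone hsplitX hsplitY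
  omega

theorem exists_isVertexCover_card_eq_nuSet [Finite V] (hH : H.Colorable 2) :
    ∃ T : Finset V, H.IsVertexCover T ∧ #T = nuSet H.edgeSet := by
  classical
  have := Fintype.ofFinite V
  obtain ⟨T, hT⟩ := exists_minimalFor_of_wellFoundedLT
    (fun T : Finset V ↦ H.IsVertexCover T) card ⟨univ, by simp⟩
  obtain ⟨f, hf, hfT⟩ := (Fintype.all_card_le_filter_rel_iff_exists_injective
    fun (t : T) v ↦ H.Adj t v ∧ v ∉ T).1 fun X ↦ by
      rw [← card_map (Embedding.subtype _)]
      refine card_le_card_of_colorable_two_of_minimalFor hH hT (map_subtype_subset X) ?_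
      intro x hx v hv hxv
      obtain ⟨t, ht, rfl⟩ := mem_map.1 hx
      exact mem_filter.2 ⟨mem_univ v, t, ht, hxv, hv⟩
  exact ⟨T, hT.prop, (card_le_nuSet_of_injective hf (fun t ↦ (hfT t).1) fun t ↦ (hfT t).2).antisymm
    (nuSet_le_card_of_isVertexCover hT.prop)⟩

theorem stmt2_general [Finite V] (hbip : H.Colorable 2) (hHG : H ≤ G) (b : ℝ)
    (hP2 : ∀ u v : V, G.Adj u v → ¬H.Adj u v → b ≤ sdeg H u + sdeg H v) :
    ∃ S T : Finset V, Disjoint S T ∧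
      #T = nuSet H.edgeSet ∧
      (#S : ℤ) = 2 * ((nuSet G.edgeSet : ℤ) - (nuSet H.edgeSet : ℤ)) ∧
      (∀ u v : V, H.Adj u v → u ∈ S → v ∈ T) ∧
      #S * (b / 2) ≤ ∑ s ∈ S, (sdeg H s : ℝ) := by
  classical
  obtain ⟨T, hT, hTcard⟩ := exists_isVertexCover_card_eq_nuSet hbip
  obtain ⟨N, hNG, hN, hNT, hNcard⟩ := exists_isEdgeMatching_avoiding G.edgeSet T
  have hmono : nuSet H.edgeSet ≤ nuSet G.edgeSet := nuSet_mono_s2 (SimpleGraph.edgeSet_mono hHG)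
  have hScard := hN.card_biUnion_toFinset hNG
  have hST : ∀ v ∈ N.biUnion Sym2.toFinset, v ∉ T := by
    intro v hv
    obtain ⟨e, he, hve⟩ := mem_biUnion.1 hv
    exact hNT e he v (Sym2.mem_toFinset.1 hve)
  have hdeg : ∀ u v, s(u, v) ∈ N → b ≤ sdeg H u + sdeg H v := fun u v huv ↦
    hP2 u v (hNG huv) (notMem_edgeSet_of_isVertexCover hT (hNT _ huv))
  refine ⟨N.biUnion Sym2.toFinset, T, disjoint_left.2 hST, hTcard, by omega,
    fun u v huv hu ↦ (hT huv).resolve_left (hST u hu), ?_⟩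
  have hsum := hN.card_nsmul_le_sum_biUnion_toFinset hNG hdeg
  rw [nsmul_eq_mul] at hsum
  rw [hScard, Nat.cast_mul, Nat.cast_ofNat]
  linarith

end

/-- If `H` is an unweighted EDCS(G, β, β(1−λ)) of a bipartite graph `G`
with `0 < λ < 1`, then there are disjoint vertex sets `S`, `T` with `|T| = μ(H)`,
`|S| = 2(μ(G) − μ(H))`, every edge of `H` incident to `S` going to `T`, and the vertices of
`S` having average degree in `H` at least `β(1−λ)/2`. -/
theorem stmt2 {V : Type*} [Fintype V] [DecidableEq V] (G H : SimpleGraph V)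
    (hbip : G.Colorable 2) (hHG : H ≤ G)
    (β lam : ℝ) (hlam0 : 0 < lam) (hlam1 : lam < 1)
    (hP1 : ∀ u v : V, H.Adj u v → (sdeg H u + sdeg H v : ℝ) ≤ β)
    (hP2 : ∀ u v : V, G.Adj u v → ¬ H.Adj u v →
      (sdeg H u + sdeg H v : ℝ) ≥ β * (1 - lam)) :
    ∃ S T : Finset V, Disjoint S T ∧
      T.card = nuSet H.edgeSet ∧
      (S.card : ℤ) = 2 * ((nuSet G.edgeSet : ℤ) - (nuSet H.edgeSet : ℤ)) ∧
      (∀ u v : V, H.Adj u v → u ∈ S → v ∈ T) ∧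
      (S.card : ℝ) * (β * (1 - lam) / 2) ≤ ∑ s ∈ S, (sdeg H s : ℝ) := by
  exact stmt2_general (hbip.mono_left hHG) hHG (β * (1 - lam)) hP2
end

section
/- Let a graph contain disjoint vertex sets U and V with |U| = c·|V| for some real c > 0, such that every edge incident to a vertex of U has its other endpoint in V (edges incident to V may go elsewhere). Let d(v) denote the degree of vertex v, and suppose that for every edge (u,v) of the graph, d(u) + d(v) ≤ Δ, where Δ is a positive integer. Then the sum of the degrees of the vertices of U is at most Δ·|U|/(c+1); equivalently, the average degree of the vertices of U is at most Δ/(c+1). -/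
/-!
Let `e` be the number of adjacent pairs `(u, w)` with `u ∈ U` and `w ∈ W`. By Cauchy–Schwarz, the
squares of the degrees sum to at least `e ^ 2 / |U|` over `U` and, counting only neighbours in `U`,
to at least `e ^ 2 / |W|` over `W`. Together these squares are the sum over all such pairs of the
two degrees, hence at most `e * Δ`, which gives `(|U| + |W|) * e ≤ |U| * |W| * Δ`.
-/

section Relation

open Finset

variable {α β : Type*} (r : α → β → Prop) (s : Finset α) (t : Finset β)
  [∀ a b, Decidable (r a b)]

theorem sum_sq_card_bipartiteAbove_add_sum_sq_card_bipartiteBelow :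
    ∑ a ∈ s, #(t.bipartiteAbove r a) ^ 2 + ∑ b ∈ t, #(s.bipartiteBelow r b) ^ 2 =
      ∑ a ∈ s, ∑ b ∈ t.bipartiteAbove r a,
        (#(t.bipartiteAbove r a) + #(s.bipartiteBelow r b)) := by
  have below : ∑ b ∈ t, #(s.bipartiteBelow r b) ^ 2 =
      ∑ a ∈ s, ∑ b ∈ t.bipartiteAbove r a, #(s.bipartiteBelow r b) := by
    simp only [sum_sum_bipartiteAbove_eq_sum_sum_bipartiteBelow, sum_const, smul_eq_mul, sq]
  rw [below]
  simp only [sum_add_distrib, sum_const, smul_eq_mul, sq]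

variable {r s t} {Δ : ℕ}

theorem sum_sq_card_bipartite_le
    (h : ∀ a ∈ s, ∀ b ∈ t, r a b → #(t.bipartiteAbove r a) + #(s.bipartiteBelow r b) ≤ Δ) :
    ∑ a ∈ s, #(t.bipartiteAbove r a) ^ 2 + ∑ b ∈ t, #(s.bipartiteBelow r b) ^ 2 ≤
      (∑ a ∈ s, #(t.bipartiteAbove r a)) * Δ := by
  rw [sum_sq_card_bipartiteAbove_add_sum_sq_card_bipartiteBelow, sum_mul]
  refine sum_le_sum fun a ha => sum_le_card_nsmul _ _ _ fun b hb => ?_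
  obtain ⟨hbt, hab⟩ := (mem_bipartiteAbove r).mp hb
  exact h a ha b hbt hab

theorem card_add_card_mul_sum_card_bipartiteAbove_le
    (h : ∀ a ∈ s, ∀ b ∈ t, r a b → #(t.bipartiteAbove r a) + #(s.bipartiteBelow r b) ≤ Δ) :
    (#s + #t) * ∑ a ∈ s, #(t.bipartiteAbove r a) ≤ #s * #t * Δ := by
  set e := ∑ a ∈ s, #(t.bipartiteAbove r a) with he
  have hs : e ^ 2 ≤ #s * ∑ a ∈ s, #(t.bipartiteAbove r a) ^ 2 := sq_sum_le_card_mul_sum_sq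
  have ht : e ^ 2 ≤ #t * ∑ b ∈ t, #(s.bipartiteBelow r b) ^ 2 := by
    rw [he, sum_card_bipartiteAbove_eq_sum_card_bipartiteBelow]
    exact sq_sum_le_card_mul_sum_sq
  obtain he0 | hepos := e.eq_zero_or_pos
  · simp only [he0, mul_zero, zero_le]
  refine le_of_mul_le_mul_right ?_ hepos
  calc (#s + #t) * e * e = #t * e ^ 2 + #s * e ^ 2 := by ring
    _ ≤ #t * (#s * ∑ a ∈ s, #(t.bipartiteAbove r a) ^ 2) +
        #s * (#t * ∑ b ∈ t, #(s.bipartiteBelow r b) ^ 2) := by gcongr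
    _ = #s * #t *
        (∑ a ∈ s, #(t.bipartiteAbove r a) ^ 2 + ∑ b ∈ t, #(s.bipartiteBelow r b) ^ 2) := by ring
    _ ≤ #s * #t * (e * Δ) := by gcongr; exact sum_sq_card_bipartite_le h
    _ = #s * #t * Δ * e := by ring

end Relation

section Graph

open Finset

variable {V : Type*} (G : SimpleGraph V) [G.LocallyFinite]

theorem card_bipartiteAbove_adj_eq_degree [DecidableRel G.Adj] {W : Finset V} {u : V}
    (h : ∀ v, G.Adj u v → v ∈ W) : #(W.bipartiteAbove G.Adj u) = G.degree u := by
  rw [← G.card_neighborFinset_eq_degree]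
  congr 1
  ext v
  simpa only [mem_bipartiteAbove, G.mem_neighborFinset, and_iff_right_iff_imp] using h v

theorem card_bipartiteBelow_adj_le_degree [DecidableRel G.Adj] (U : Finset V) (w : V) :
    #(U.bipartiteBelow G.Adj w) ≤ G.degree w := by
  rw [← G.card_neighborFinset_eq_degree]
  refine card_le_card fun u hu => ?_
  exact (G.mem_neighborFinset w u).mpr ((mem_bipartiteBelow G.Adj).mp hu).2.symm

variable {U W : Finset V} {Δ : ℕ}

theorem card_add_card_mul_sum_degree_le (hedge : ∀ u ∈ U, ∀ v, G.Adj u v → v ∈ W)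
    (hdeg : ∀ u ∈ U, ∀ w ∈ W, G.Adj u w → G.degree u + G.degree w ≤ Δ) :
    (#U + #W) * ∑ u ∈ U, G.degree u ≤ #U * #W * Δ := by
  classical
  have degree_eq : ∀ u ∈ U, #(W.bipartiteAbove G.Adj u) = G.degree u :=
    fun u hu => card_bipartiteAbove_adj_eq_degree G (hedge u hu)
  rw [← sum_congr rfl degree_eq]
  refine card_add_card_mul_sum_card_bipartiteAbove_le fun u hu w hw huw => ?_
  calc #(W.bipartiteAbove G.Adj u) + #(U.bipartiteBelow G.Adj w)
      ≤ G.degree u + G.degree w :=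
        add_le_add (degree_eq u hu).le (card_bipartiteBelow_adj_le_degree G U w)
    _ ≤ Δ := hdeg u hu w hw huw

theorem stmt3_general {c : ℝ} (hc : 0 ≤ c) (hcard : (#U : ℝ) = c * #W)
    (hedge : ∀ u ∈ U, ∀ v, G.Adj u v → v ∈ W)
    (hdeg : ∀ u ∈ U, ∀ w ∈ W, G.Adj u w → G.degree u + G.degree w ≤ Δ) :
    (∑ u ∈ U, (G.degree u : ℝ)) ≤ Δ * #U / (c + 1) := by
  obtain rfl | hW := W.eq_empty_or_nonempty
  · have hU : U = ∅ := by simpa using hcard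
    simp [hU]
  have hWpos : (0 : ℝ) < #W := mod_cast hW.card_pos
  have key : ((#U : ℝ) + #W) * ∑ u ∈ U, (G.degree u : ℝ) ≤ #U * #W * Δ :=
    mod_cast card_add_card_mul_sum_degree_le G hedge hdeg
  rw [le_div_iff₀ (by positivity)]
  refine le_of_mul_le_mul_right ?_ hWpos
  calc (∑ u ∈ U, (G.degree u : ℝ)) * (c + 1) * #W
      = (#U + #W) * ∑ u ∈ U, (G.degree u : ℝ) := by rw [hcard]; ring
    _ ≤ #U * #W * Δ := key
    _ = Δ * #U * #W := by ring

end Graph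

/-- If `U` and `W` are disjoint vertex sets with `|U| = c·|W|` (`c > 0`),
every edge incident to `U` has its other endpoint in `W`, and every edge `(u,v)` of the graph
satisfies `d(u) + d(v) ≤ Δ`, then the total degree of `U` is at most `Δ·|U|/(c+1)`. -/
theorem stmt3 {V : Type*} [Fintype V] [DecidableEq V] (G : SimpleGraph V) [DecidableRel G.Adj]
    (U W : Finset V) (hdisj : Disjoint U W)
    (c : ℝ) (hc : 0 < c) (hcard : (U.card : ℝ) = c * W.card)
    (hedge : ∀ u v : V, G.Adj u v → u ∈ U → v ∈ W)
    (Δ : ℕ) (hΔ : 0 < Δ)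
    (hdeg : ∀ u v : V, G.Adj u v → G.degree u + G.degree v ≤ Δ) :
    (∑ u ∈ U, (G.degree u : ℝ)) ≤ Δ * U.card / (c + 1) :=
  stmt3_general G hc.le hcard (fun u hu v huv => hedge u v huv hu) fun u _ w _ => hdeg u w
end

section
/- Let G = (V, E_G) be a bipartite graph and let H = (V, E_H) be a weighted edge-degree-constrained subgraph EDCS(G, β, β−1). Let P be a path in G with endpoints s and t, let L(P) denote the number of vertices of P, and suppose that L(P) is even and that every even-numbered edge of P (the second edge, the fourth edge, and so on) belongs to H. Then d_H(s) + d_H(t) ≥ β − 1 − (L(P) − 2)/2. -/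
/-!
Number the edges of the path from one. The degree sum of the endpoints is the total of
`d(u) + d(v)` over the odd-numbered edges `uv` minus the same total over the even-numbered
edges, since every inner position belongs to exactly one edge of each parity. Each of the `k`
odd-numbered edges contributes at least `β'`, and each of the `k - 1` even-numbered ones takes
away at most `β`.
-/

section AlternatingPairs

variable {M : Type*} [AddCommMonoid M]

theorem sum_even_pairs_eq_ends_add_sum_odd_pairs (d : ℕ → M) (m : ℕ) :
    ∑ i ∈ Finset.range (m + 1), (d (2 * i) + d (2 * i + 1)) =
      d 0 + d (2 * m + 1) + ∑ i ∈ Finset.range m, (d (2 * i + 1) + d (2 * i + 2)) := by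
  induction m with
  | zero => simp
  | succ m ih =>
    rw [Finset.sum_range_succ, ih, Finset.sum_range_succ, Nat.mul_succ]
    abel

theorem succ_nsmul_le_ends_add_nsmul_of_pair_bounds [PartialOrder M] [IsOrderedAddMonoid M]
    {d : ℕ → M} {a b : M} {m : ℕ}
    (hlower : ∀ i ≤ m, a ≤ d (2 * i) + d (2 * i + 1))
    (hupper : ∀ i < m, d (2 * i + 1) + d (2 * i + 2) ≤ b) :
    (m + 1) • a ≤ d 0 + d (2 * m + 1) + m • b :=
  calc
    (m + 1) • a ≤ ∑ i ∈ Finset.range (m + 1), (d (2 * i) + d (2 * i + 1)) := by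
      simpa using Finset.card_nsmul_le_sum (Finset.range (m + 1)) _ a
        fun i hi => hlower i (Finset.mem_range_succ_iff.mp hi)
    _ = d 0 + d (2 * m + 1) + ∑ i ∈ Finset.range m, (d (2 * i + 1) + d (2 * i + 2)) :=
      sum_even_pairs_eq_ends_add_sum_odd_pairs d m
    _ ≤ d 0 + d (2 * m + 1) + m • b := by
      gcongr
      simpa using Finset.sum_le_card_nsmul (Finset.range m) _ b
        fun i hi => hupper i (Finset.mem_range.mp hi)

end AlternatingPairs

theorem stmt4_general {V : Type*} [Fintype V] [DecidableEq V] (G : SimpleGraph V)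
    [DecidableRel G.Adj] (β β' : ℝ) (w : Sym2 V → ℕ)
    (hP1 : ∀ u v : V, G.Adj u v → w s(u, v) ≠ 0 → (wdeg G w u + wdeg G w v : ℝ) ≤ β)
    (hP2 : ∀ u v : V, G.Adj u v → (wdeg G w u + wdeg G w v : ℝ) ≥ β')
    (k : ℕ) (hk : 1 ≤ k) (p : ℕ → V)
    (hadj : ∀ i, i + 1 < 2 * k → G.Adj (p i) (p (i + 1)))
    (heven : ∀ i, i % 2 = 1 → i + 1 < 2 * k → w s(p i, p (i + 1)) ≠ 0) :
    (wdeg G w (p 0) + wdeg G w (p (2 * k - 1)) : ℝ) ≥ β' - (k - 1) * (β - β') := by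
  obtain ⟨m, rfl⟩ := Nat.exists_eq_add_of_le' hk
  have hlower (i : ℕ) (hi : i ≤ m) :
      β' ≤ (wdeg G w (p (2 * i)) + wdeg G w (p (2 * i + 1)) : ℝ) :=
    hP2 _ _ (hadj _ (by omega))
  have hupper (i : ℕ) (hi : i < m) :
      (wdeg G w (p (2 * i + 1)) + wdeg G w (p (2 * i + 2)) : ℝ) ≤ β :=
    hP1 _ _ (hadj _ (by omega)) (heven _ (by omega) (by omega))
  have hends : (m + 1) • β' ≤
      (wdeg G w (p 0) + wdeg G w (p (2 * m + 1)) : ℝ) + m • β :=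
    succ_nsmul_le_ends_add_nsmul_of_pair_bounds (d := fun i => (wdeg G w (p i) : ℝ)) hlower hupper
  rw [show 2 * (m + 1) - 1 = 2 * m + 1 by omega]
  simp only [nsmul_eq_mul, Nat.cast_add, Nat.cast_one] at hends ⊢
  linarith

/-- Let `H` (the support of the weight function `w`) be a weighted
EDCS(G, β, β−1) of a bipartite graph `G`.  Let `P` be a path in `G` with an even number
`L(P) = 2k` of vertices `p 0, …, p (2k−1)`, every even-numbered edge of which lies in `H`.
Then `d_H(s) + d_H(t) ≥ β − 1 − (L(P) − 2)/2` for the endpoints `s = p 0`, `t = p (2k−1)`. -/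
theorem stmt4 {V : Type*} [Fintype V] [DecidableEq V] (G : SimpleGraph V) [DecidableRel G.Adj]
    (hbip : G.Colorable 2) (β : ℝ)
    (w : Sym2 V → ℕ) (hsupp : ∀ e, w e ≠ 0 → e ∈ G.edgeSet)
    (hP1 : ∀ u v : V, G.Adj u v → w s(u, v) ≠ 0 →
      (wdeg G w u + wdeg G w v : ℝ) ≤ β)
    (hP2 : ∀ u v : V, G.Adj u v → (wdeg G w u + wdeg G w v : ℝ) ≥ β - 1)
    (k : ℕ) (hk : 1 ≤ k) (p : ℕ → V)
    (hadj : ∀ i, i + 1 < 2 * k → G.Adj (p i) (p (i + 1)))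
    (hdist : ∀ i j, i < 2 * k → j < 2 * k → p i = p j → i = j)
    (heven : ∀ i, i % 2 = 1 → i + 1 < 2 * k → w s(p i, p (i + 1)) ≠ 0) :
    (wdeg G w (p 0) + wdeg G w (p (2 * k - 1)) : ℝ) ≥
      β - 1 - ((2 * k : ℝ) - 2) / 2 := by
  linarith [stmt4_general G β (β - 1) w hP1 hP2 k hk p hadj heven]
end

section
/- Let G be a bipartite graph and let H be an unweighted edge-degree-constrained subgraph EDCS(G, β, β−1). Call an edge (u,v) full if it is in H and d_H(u) + d_H(v) = β, and deficient if it is in G but not in H and d_H(u) + d_H(v) = β − 1. Then any walk in G whose edges alternate between full and deficient edges is a simple path, and its length (number of edges) is at most 2β + 1. -/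
/-- An edge of `H` is *full* if its edge degree in `H` equals `β`. -/
noncomputable def IsFullEdge {V : Type*} (H : SimpleGraph V) (β : ℕ) (u v : V) : Prop :=
  H.Adj u v ∧ sdeg H u + sdeg H v = β

/-- An edge of `G` not in `H` is *deficient* if its edge degree in `H` equals `β − 1`. -/
noncomputable def IsDeficientEdge {V : Type*} (G H : SimpleGraph V) (β : ℕ) (u v : V) : Prop :=
  G.Adj u v ∧ ¬ H.Adj u v ∧ sdeg H u + sdeg H v = β - 1

/-!
Along an alternating walk the sum of two consecutive degrees takes the values `β` and `β - 1` in
turn. Hence the degrees at positions of equal parity form an arithmetic progression with difference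
`1` or `-1`, so no vertex repeats at such positions; in a bipartite graph a vertex never repeats at
positions of different parity. All degrees on the walk lie between `0` and `β`, so a progression of
degrees has at most `β + 1` terms.
-/

section AlternatingSums

variable {A : Type*} [AddCommGroup A] {d : ℕ → A} {k : ℕ}

theorem sub_eq_sub_of_add_periodic (hd : ∀ i, i + 3 ≤ k → d (i + 2) + d (i + 3) = d i + d (i + 1))
    (i m : ℕ) (h : i + 2 * m + 2 ≤ k) :
    d (i + 2 * m + 2) - d (i + 2 * m) = d (i + 2) - d i := by
  induction m with
  | zero => rfl
  | succ m ih =>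
    have h₀ := hd (i + 2 * m) (by lia)
    have h₁ := hd (i + 2 * m + 1) (by lia)
    rw [← ih (by lia)]
    calc d (i + 2 * m + 4) - d (i + 2 * m + 2)
        = (d (i + 2 * m + 3) + d (i + 2 * m + 4)) - (d (i + 2 * m + 2) + d (i + 2 * m + 3)) := by
          abel
      _ = (d (i + 2 * m + 1) + d (i + 2 * m + 2)) - (d (i + 2 * m) + d (i + 2 * m + 1)) := by
          rw [h₀, h₁]
      _ = d (i + 2 * m + 2) - d (i + 2 * m) := by abel

theorem eq_add_nsmul_of_add_periodic
    (hd : ∀ i, i + 3 ≤ k → d (i + 2) + d (i + 3) = d i + d (i + 1))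
    (i m : ℕ) (h : i + 2 * m ≤ k) :
    d (i + 2 * m) = d i + m • (d (i + 2) - d i) := by
  induction m with
  | zero => simp
  | succ m ih =>
    rw [succ_nsmul, ← add_assoc, ← ih (by lia), ← sub_eq_sub_of_add_periodic hd i m h,
      add_sub_cancel]
    rfl

end AlternatingSums

section AlternatingWalk

variable {V : Type*} {G H : SimpleGraph V} {β k : ℕ} {p : ℕ → V} {u v w : V}

theorem exists_walk_length_eq (hadj : ∀ i < k, G.Adj (p i) (p (i + 1))) (i m : ℕ)
    (h : i + m ≤ k) : ∃ q : G.Walk (p i) (p (i + m)), q.length = m := by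
  induction m with
  | zero => exact ⟨.nil, rfl⟩
  | succ m ih =>
    obtain ⟨q, hq⟩ := ih (by lia)
    exact ⟨q.concat (hadj (i + m) (by lia)), by rw [SimpleGraph.Walk.length_concat, hq]⟩

theorem even_of_eq_of_two_colorable (hbip : G.Colorable 2)
    (hadj : ∀ i < k, G.Adj (p i) (p (i + 1))) {i m : ℕ} (h : i + m ≤ k)
    (hp : p (i + m) = p i) : Even m := by
  obtain ⟨q, hq⟩ := exists_walk_length_eq hadj i m h
  simpa only [SimpleGraph.Walk.length_copy, hq] using
    SimpleGraph.two_colorable_iff_forall_loop_even.mp hbip (p i) (q.copy rfl hp)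

theorem IsFullEdge.symm (h : IsFullEdge H β u v) : IsFullEdge H β v u :=
  ⟨h.1.symm, (add_comm _ _).trans h.2⟩

theorem IsDeficientEdge.symm (h : IsDeficientEdge G H β u v) : IsDeficientEdge G H β v u :=
  ⟨h.1.symm, fun hH => h.2.1 hH.symm, (add_comm _ _).trans h.2.2⟩

theorem IsFullEdge.pos (h : IsFullEdge H β u v) (hu : (H.neighborSet u).Finite) : 0 < β := by
  have hdeg : 0 < sdeg H u := (Set.ncard_pos hu).mpr ⟨v, h.1⟩
  exact h.2 ▸ Nat.add_pos_left hdeg _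

theorem IsFullEdge.sdeg_eq_add_one (hF : IsFullEdge H β u v) (hD : IsDeficientEdge G H β v w)
    (hv : (H.neighborSet v).Finite) : sdeg H u = sdeg H w + 1 := by
  have hβ := hF.symm.pos hv
  have huv := hF.2
  have hvw := hD.2.2
  lia

/-- `IsAlternatingWalk G H β k p` says that `p 0, …, p k` is a walk in `G` with `k` edges, which
are alternately full and deficient. The walk is encoded by a sequence on all of `ℕ`, whose values
beyond `k` are arbitrary. -/
structure IsAlternatingWalk (G H : SimpleGraph V) (β k : ℕ) (p : ℕ → V) : Prop where
  adj : ∀ i < k, G.Adj (p i) (p (i + 1))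
  full_or_deficient : ∀ i < k, IsFullEdge H β (p i) (p (i + 1)) ∨
    IsDeficientEdge G H β (p i) (p (i + 1))
  alternate : ∀ i, i + 1 < k →
    (IsFullEdge H β (p i) (p (i + 1)) → IsDeficientEdge G H β (p (i + 1)) (p (i + 2))) ∧
    (IsDeficientEdge G H β (p i) (p (i + 1)) → IsFullEdge H β (p (i + 1)) (p (i + 2)))

namespace IsAlternatingWalk

theorem full_deficient_or_deficient_full (h : IsAlternatingWalk G H β k p) {i : ℕ}
    (hi : i + 1 < k) :
    IsFullEdge H β (p i) (p (i + 1)) ∧ IsDeficientEdge G H β (p (i + 1)) (p (i + 2)) ∨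
    IsDeficientEdge G H β (p i) (p (i + 1)) ∧ IsFullEdge H β (p (i + 1)) (p (i + 2)) :=
  (h.full_or_deficient i (by lia)).imp (fun hF => ⟨hF, (h.alternate i hi).1 hF⟩)
    (fun hD => ⟨hD, (h.alternate i hi).2 hD⟩)

theorem sdeg_add_sdeg_le (h : IsAlternatingWalk G H β k p) {i : ℕ} (hi : i < k) :
    sdeg H (p i) + sdeg H (p (i + 1)) ≤ β := by
  rcases h.full_or_deficient i hi with hF | hD
  · exact hF.2.le
  · exact hD.2.2.trans_le (Nat.sub_le β 1)

theorem sdeg_add_sdeg_periodic (h : IsAlternatingWalk G H β k p) {i : ℕ} (hi : i + 3 ≤ k) :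
    sdeg H (p (i + 2)) + sdeg H (p (i + 3)) = sdeg H (p i) + sdeg H (p (i + 1)) := by
  rcases h.full_deficient_or_deficient_full (i := i) (by lia) with ⟨hF, hD⟩ | ⟨hD, hF⟩
  · exact ((h.alternate (i + 1) hi).2 hD).2.trans hF.2.symm
  · exact ((h.alternate (i + 1) hi).1 hF).2.2.trans hD.2.2.symm

theorem abs_sdeg_sub_sdeg_eq_one (h : IsAlternatingWalk G H β k p)
    (hfin : ∀ v, (H.neighborSet v).Finite) {i : ℕ} (hi : i + 2 ≤ k) :
    |(sdeg H (p (i + 2)) - sdeg H (p i) : ℤ)| = 1 := by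
  rcases h.full_deficient_or_deficient_full hi with ⟨hF, hD⟩ | ⟨hD, hF⟩
  · simp [hF.sdeg_eq_add_one hD (hfin _)]
  · simp [hF.symm.sdeg_eq_add_one hD.symm (hfin _)]

theorem abs_sdeg_sub_sdeg (h : IsAlternatingWalk G H β k p)
    (hfin : ∀ v, (H.neighborSet v).Finite) {i m : ℕ} (hm : i + 2 * m ≤ k) :
    |(sdeg H (p (i + 2 * m)) - sdeg H (p i) : ℤ)| = m := by
  obtain rfl | hpos := m.eq_zero_or_pos
  · simp
  have hprog := eq_add_nsmul_of_add_periodic (d := fun j => (sdeg H (p j) : ℤ))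
    (fun j hj => mod_cast h.sdeg_add_sdeg_periodic hj) i m hm
  rw [hprog, add_sub_cancel_left, abs_nsmul, h.abs_sdeg_sub_sdeg_eq_one hfin (by lia),
    nsmul_one]

theorem eq_zero_of_apply_eq (h : IsAlternatingWalk G H β k p) (hbip : G.Colorable 2)
    (hfin : ∀ v, (H.neighborSet v).Finite) {i m : ℕ} (hm : i + m ≤ k) (hp : p (i + m) = p i) :
    m = 0 := by
  obtain ⟨n, rfl⟩ := (even_of_eq_of_two_colorable hbip h.adj hm hp).two_dvd
  have hdist := h.abs_sdeg_sub_sdeg hfin hm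
  rw [hp, sub_self, abs_zero] at hdist
  lia

theorem injOn (h : IsAlternatingWalk G H β k p) (hbip : G.Colorable 2)
    (hfin : ∀ v, (H.neighborSet v).Finite) : Set.InjOn p (Set.Iic k) := by
  intro i hi j hj hij
  wlog hle : i ≤ j generalizing i j
  · exact (this hj hi hij.symm (le_of_not_ge hle)).symm
  obtain ⟨m, rfl⟩ := Nat.exists_eq_add_of_le hle
  rw [h.eq_zero_of_apply_eq hbip hfin hj hij.symm, add_zero]

theorem length_le (h : IsAlternatingWalk G H β k p) (hfin : ∀ v, (H.neighborSet v).Finite) :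
    k ≤ 2 * β + 1 := by
  by_contra! hk
  have hfirst : sdeg H (p 0) ≤ β := Nat.le_of_add_right_le (h.sdeg_add_sdeg_le (by lia))
  have hlast : sdeg H (p (0 + 2 * (β + 1))) ≤ β := by
    rw [zero_add]
    exact Nat.le_of_add_left_le (h.sdeg_add_sdeg_le (i := 2 * β + 1) hk)
  have hdist := h.abs_sdeg_sub_sdeg hfin (i := 0) (m := β + 1) (by lia)
  have hbound := abs_sub_le_of_nonneg_of_le (Int.natCast_nonneg _) (Int.ofNat_le.mpr hlast)
    (Int.natCast_nonneg _) (Int.ofNat_le.mpr hfirst)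
  lia

end IsAlternatingWalk

end AlternatingWalk

theorem stmt7_general {V : Type*} {G H : SimpleGraph V} {β k : ℕ} {p : ℕ → V}
    (hbip : G.Colorable 2) (hfin : ∀ v, (H.neighborSet v).Finite)
    (h : IsAlternatingWalk G H β k p) :
    (∀ i ≤ k, ∀ j ≤ k, p i = p j → i = j) ∧ k ≤ 2 * β + 1 :=
  ⟨fun _ hi _ hj hij => h.injOn hbip hfin hi hj hij, h.length_le hfin⟩

/-- Let `H` be an unweighted EDCS(G, β, β−1) of a bipartite graph `G`.
Any walk in `G` whose edges alternate between full and deficient edges is a simple path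
of length at most `2β + 1`. -/
theorem stmt7 {V : Type*} [Fintype V] (G H : SimpleGraph V)
    (hbip : G.Colorable 2) (hHG : H ≤ G) (β : ℕ)
    (hP1 : ∀ u v : V, H.Adj u v → sdeg H u + sdeg H v ≤ β)
    (hP2 : ∀ u v : V, G.Adj u v → ¬ H.Adj u v → β - 1 ≤ sdeg H u + sdeg H v)
    (k : ℕ) (p : ℕ → V)
    (hadj : ∀ i < k, G.Adj (p i) (p (i + 1)))
    (hFD : ∀ i < k, IsFullEdge H β (p i) (p (i + 1)) ∨
      IsDeficientEdge G H β (p i) (p (i + 1)))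
    (halt : ∀ i, i + 1 < k →
      (IsFullEdge H β (p i) (p (i + 1)) →
        IsDeficientEdge G H β (p (i + 1)) (p (i + 2))) ∧
      (IsDeficientEdge G H β (p i) (p (i + 1)) →
        IsFullEdge H β (p (i + 1)) (p (i + 2)))) :
    (∀ i ≤ k, ∀ j ≤ k, p i = p j → i = j) ∧ k ≤ 2 * β + 1 :=
  stmt7_general hbip (fun _ => Set.toFinite _) ⟨hadj, hFD, halt⟩
end

section
/- Let G be a bipartite graph, let 0 < λ < 1 with ℓ := βλ/6 a positive integer, and let H be an unweighted edge-degree-constrained subgraph EDCS(G, β, β(1−λ)). Call an edge (u,v) full if it is in H and d_H(u) + d_H(v) = β, and augmentable if it is in G but not in H and β(1−λ) ≤ d_H(u) + d_H(v) ≤ β(1−λ) + 5ℓ. Then any walk in G whose edges alternate between full and augmentable edges is a simple path, and its length (number of edges) is at most 12/λ + 1. -/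
/-- An edge of `G` not in `H` is *augmentable* if its edge degree in `H` lies between
`β(1−λ)` and `β(1−λ) + 5ℓ`, where `ℓ = βλ/6`. -/
noncomputable def IsAugmentableEdge {V : Type*} (G H : SimpleGraph V) (β : ℕ) (lam : ℝ)
    (ℓ : ℕ) (u v : V) : Prop :=
  G.Adj u v ∧ ¬ H.Adj u v ∧
    (β : ℝ) * (1 - lam) ≤ (sdeg H u + sdeg H v : ℝ) ∧
    (sdeg H u + sdeg H v : ℝ) ≤ (β : ℝ) * (1 - lam) + 5 * ℓ

/-
Two consecutive edges of the walk share a vertex, so the degrees of the vertices at distance two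
differ by exactly the difference of the two edge degrees, which is at least `ℓ`. Alternation makes
this difference keep its sign, so the degree of every second vertex moves monotonically by at least
`ℓ` at each double step. Hence no vertex recurs at even distance, while an odd closed walk is
impossible in a bipartite graph. As degrees along the walk lie in `[0, β]`, there are at most
`β / ℓ = 6 / λ` double steps.
-/

/-- The steps `0, …, k - 1` of a walk, described by the properties `P` and `Q` of their index,
alternate between `P` and `Q`, beginning with either. -/
structure AlternateBelow (P Q : ℕ → Prop) (k : ℕ) : Prop where
  left_or_right : ∀ i < k, P i ∨ Q i
  right_of_left : ∀ i, i + 1 < k → P i → Q (i + 1)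
  left_of_right : ∀ i, i + 1 < k → Q i → P (i + 1)

namespace AlternateBelow

variable {P Q : ℕ → Prop} {k : ℕ}

theorem symm (h : AlternateBelow P Q k) : AlternateBelow Q P k :=
  ⟨fun i hi => (h.left_or_right i hi).symm, h.left_of_right, h.right_of_left⟩

theorem left_add_two_mul (h : AlternateBelow P Q k) {i : ℕ} (hi : P i) (m : ℕ)
    (hm : i + 2 * m < k) : P (i + 2 * m) := by
  induction m with
  | zero => exact hi
  | succ m ih =>
    have hQ : Q (i + 2 * m + 1) := h.right_of_left _ (by omega) (ih (by omega))
    exact h.left_of_right _ hm hQ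

section OrderedGroup

variable {α : Type*} [AddCommGroup α]

theorem nsmul_le_sub [PartialOrder α] [IsOrderedAddMonoid α] {d : ℕ → α} {c : α}
    (h : AlternateBelow P Q k) (hd : ∀ i, P i → Q (i + 1) → c ≤ d (i + 2) - d i)
    {i m : ℕ} (hi : P i) (hm : i + 2 * m ≤ k) : m • c ≤ d (i + 2 * m) - d i := by
  have hstep : ∀ n ∈ Finset.range m, c ≤ d (i + 2 * (n + 1)) - d (i + 2 * n) := by
    intro n hn
    have hnm : n < m := Finset.mem_range.mp hn
    have hP : P (i + 2 * n) := h.left_add_two_mul hi n (by omega)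
    have hQ : Q (i + 2 * n + 1) := h.right_of_left _ (by omega) hP
    exact hd _ hP hQ
  calc m • c = (Finset.range m).card • c := by rw [Finset.card_range]
    _ ≤ ∑ n ∈ Finset.range m, (d (i + 2 * (n + 1)) - d (i + 2 * n)) :=
      Finset.card_nsmul_le_sum _ _ _ hstep
    _ = d (i + 2 * m) - d i := Finset.sum_range_sub (fun n => d (i + 2 * n)) m

variable [LinearOrder α] [IsOrderedAddMonoid α] {d : ℕ → α} {b c : α}

theorem nsmul_le_abs_sub (h : AlternateBelow P Q k) (hP : ∀ i, P i → b ≤ d i + d (i + 1))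
    (hQ : ∀ i, Q i → d i + d (i + 1) + c ≤ b) {i m : ℕ} (hm : i + 2 * m ≤ k) :
    m • c ≤ |d (i + 2 * m) - d i| := by
  obtain rfl | hm0 := Nat.eq_zero_or_pos m
  · simp
  obtain hi | hi := h.left_or_right i (by omega)
  · have hdrop : ∀ j, P j → Q (j + 1) → c ≤ -d (j + 2) - -d j := by
      intro j hj hj'
      have hsum : d (j + 1) + (d (j + 2) + c) ≤ d (j + 1) + d j := by
        rw [← add_assoc, add_comm (d (j + 1)) (d j)]
        exact (hQ _ hj').trans (hP j hj)
      rw [neg_sub_neg]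
      exact le_sub_iff_add_le'.mpr (le_of_add_le_add_left hsum)
    calc m • c ≤ -d (i + 2 * m) - -d i := h.nsmul_le_sub (d := fun j => -d j) hdrop hi hm
      _ = -(d (i + 2 * m) - d i) := by abel
      _ ≤ |d (i + 2 * m) - d i| := neg_le_abs _
  · have hrise : ∀ j, Q j → P (j + 1) → c ≤ d (j + 2) - d j := by
      intro j hj hj'
      have hsum : d (j + 1) + (d j + c) ≤ d (j + 1) + d (j + 2) := by
        rw [← add_assoc, add_comm (d (j + 1)) (d j)]
        exact (hQ j hj).trans (hP _ hj')
      exact le_sub_iff_add_le'.mpr (le_of_add_le_add_left hsum)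
    exact (h.symm.nsmul_le_sub hrise hi hm).trans (le_abs_self _)

theorem ne_add_two_mul (h : AlternateBelow P Q k) (hP : ∀ i, P i → b ≤ d i + d (i + 1))
    (hQ : ∀ i, Q i → d i + d (i + 1) + c ≤ b) (hc : 0 < c) {i m : ℕ} (hm : i + 2 * m ≤ k)
    (hm0 : m ≠ 0) : d i ≠ d (i + 2 * m) := by
  intro heq
  have hle : m • c ≤ |d (i + 2 * m) - d i| := h.nsmul_le_abs_sub hP hQ hm
  rw [← heq, sub_self, abs_zero] at hle
  exact hle.not_gt (nsmul_pos hc hm0)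

theorem half_nsmul_le (h : AlternateBelow P Q k) (hd : ∀ i, 0 ≤ d i) (hb : 0 ≤ b) (hc : 0 ≤ c)
    (hP : ∀ i, P i → d i + d (i + 1) = b) (hQ : ∀ i, Q i → d i + d (i + 1) + c ≤ b) :
    (k / 2) • c ≤ b := by
  obtain rfl | hk := Nat.eq_zero_or_pos k
  · simpa using hb
  have hsum : ∀ i < k, d i + d (i + 1) ≤ b := fun i hi =>
    (h.left_or_right i hi).elim (fun hi => (hP i hi).le)
      fun hi => (le_add_of_nonneg_right hc).trans (hQ i hi)
  have hle : ∀ i ≤ k, d i ≤ b := by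
    intro i hi
    obtain hi | rfl := hi.lt_or_eq
    · exact (le_add_of_nonneg_right (hd _)).trans (hsum i hi)
    · obtain ⟨n, rfl⟩ := Nat.exists_eq_add_one.mpr hk
      exact (le_add_of_nonneg_left (hd _)).trans (hsum n n.lt_succ_self)
  have hm : 0 + 2 * (k / 2) ≤ k := by omega
  exact (h.nsmul_le_abs_sub (fun i hi => (hP i hi).ge) hQ hm).trans
    (abs_sub_le_of_nonneg_of_le (hd _) (hle _ hm) (hd _) (hle _ hk.le))

end OrderedGroup

end AlternateBelow

section Bipartite

variable {V : Type*} {G : SimpleGraph V} {p : ℕ → V} {k : ℕ}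

theorem exists_walk_length_eq_of_forall_adj (hadj : ∀ i < k, G.Adj (p i) (p (i + 1)))
    (i n : ℕ) (hn : i + n ≤ k) : ∃ q : G.Walk (p i) (p (i + n)), q.length = n := by
  induction n with
  | zero => exact ⟨.nil, rfl⟩
  | succ n ih =>
    obtain ⟨q, hq⟩ := ih (by omega)
    exact ⟨q.concat (hadj (i + n) (by omega)), by rw [SimpleGraph.Walk.length_concat, hq]⟩

theorem even_of_eq_of_colorable_two (hG : G.Colorable 2)
    (hadj : ∀ i < k, G.Adj (p i) (p (i + 1))) {i n : ℕ} (hn : i + n ≤ k)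
    (hp : p i = p (i + n)) : Even n := by
  obtain ⟨q, hq⟩ := exists_walk_length_eq_of_forall_adj hadj i n hn
  have hloop : Even (q.copy rfl hp.symm).length :=
    SimpleGraph.two_colorable_iff_forall_loop_even.mp hG _ _
  rwa [SimpleGraph.Walk.length_copy, hq] at hloop

theorem AlternateBelow.injOn_of_colorable_two {α : Type*} [AddCommGroup α] [LinearOrder α]
    [IsOrderedAddMonoid α] {w : V → α} {b c : α} {P Q : ℕ → Prop} (h : AlternateBelow P Q k)
    (hG : G.Colorable 2) (hadj : ∀ i < k, G.Adj (p i) (p (i + 1))) (hc : 0 < c)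
    (hP : ∀ i, P i → b ≤ w (p i) + w (p (i + 1)))
    (hQ : ∀ i, Q i → w (p i) + w (p (i + 1)) + c ≤ b) : Set.InjOn p (Set.Iic k) := by
  intro i hi j hj hp
  wlog hij : i ≤ j generalizing i j
  · exact (this hj hi hp.symm (by omega)).symm
  obtain ⟨n, rfl⟩ := Nat.exists_eq_add_of_le hij
  obtain ⟨m, rfl⟩ := (even_of_eq_of_colorable_two hG hadj hj hp).exists_two_nsmul
  by_contra hne
  exact h.ne_add_two_mul (d := fun i => w (p i)) hP hQ hc hj (by rintro rfl; simp at hne)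
    (congrArg w hp)

end Bipartite

theorem IsAugmentableEdge.sdeg_add_sdeg_add_le {V : Type*} {G H : SimpleGraph V} {β ℓ : ℕ}
    {lam : ℝ} {u v : V} (h : IsAugmentableEdge G H β lam ℓ u v) (hℓ : (ℓ : ℝ) = β * lam / 6) :
    (sdeg H u : ℝ) + sdeg H v + ℓ ≤ β := by
  linarith [h.2.2.2]

theorem natCast_le_of_half_nsmul_le {K : Type*} [Field K] [LinearOrder K]
    [IsStrictOrderedRing K] {k : ℕ} {b c : K} (hc : 0 < c) (h : (k / 2) • c ≤ b) :
    (k : K) ≤ 2 * (b / c) + 1 := by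
  have hhalf : ((k / 2 : ℕ) : K) ≤ b / c := (le_div_iff₀ hc).mpr (by rwa [← nsmul_eq_mul])
  have hk : (k : K) ≤ 2 * ((k / 2 : ℕ) : K) + 1 := by
    exact_mod_cast (by omega : k ≤ 2 * (k / 2) + 1)
  linarith

theorem stmt8_general {V : Type*} (G H : SimpleGraph V) (hbip : G.Colorable 2)
    (β : ℕ) (lam : ℝ) (ℓ : ℕ) (hℓpos : 0 < ℓ) (hℓ : (ℓ : ℝ) = β * lam / 6)
    (k : ℕ) (p : ℕ → V)
    (hadj : ∀ i < k, G.Adj (p i) (p (i + 1)))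
    (hFD : ∀ i < k, IsFullEdge H β (p i) (p (i + 1)) ∨
      IsAugmentableEdge G H β lam ℓ (p i) (p (i + 1)))
    (halt : ∀ i, i + 1 < k →
      (IsFullEdge H β (p i) (p (i + 1)) →
        IsAugmentableEdge G H β lam ℓ (p (i + 1)) (p (i + 2))) ∧
      (IsAugmentableEdge G H β lam ℓ (p i) (p (i + 1)) →
        IsFullEdge H β (p (i + 1)) (p (i + 2)))) :
    (∀ i ≤ k, ∀ j ≤ k, p i = p j → i = j) ∧ (k : ℝ) ≤ 12 / lam + 1 := by
  have hwalk : AlternateBelow (fun i => IsFullEdge H β (p i) (p (i + 1)))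
      (fun i => IsAugmentableEdge G H β lam ℓ (p i) (p (i + 1))) k :=
    ⟨hFD, fun i hi => (halt i hi).1, fun i hi => (halt i hi).2⟩
  have hfull : ∀ i, IsFullEdge H β (p i) (p (i + 1)) →
      (sdeg H (p i) : ℝ) + sdeg H (p (i + 1)) = β := fun i hi => mod_cast hi.2
  have haug : ∀ i, IsAugmentableEdge G H β lam ℓ (p i) (p (i + 1)) →
      (sdeg H (p i) : ℝ) + sdeg H (p (i + 1)) + ℓ ≤ β := fun i hi => hi.sdeg_add_sdeg_add_le hℓ
  have hℓ0 : (0 : ℝ) < ℓ := Nat.cast_pos.mpr hℓpos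
  constructor
  · have hinj : Set.InjOn p (Set.Iic k) := hwalk.injOn_of_colorable_two
      (w := fun v => (sdeg H v : ℝ)) hbip hadj hℓ0 (fun i hi => (hfull i hi).ge) haug
    exact fun i hi j hj hp => hinj hi hj hp
  · have hhalf : (k / 2) • (ℓ : ℝ) ≤ β := hwalk.half_nsmul_le
      (d := fun i => (sdeg H (p i) : ℝ)) (fun _ => Nat.cast_nonneg _) β.cast_nonneg hℓ0.le
      hfull haug
    have hβ : (β : ℝ) ≠ 0 := by
      intro hβ
      simp [hℓ, hβ] at hℓ0
    have hratio : 2 * ((β : ℝ) / ℓ) = 12 / lam := by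
      rw [hℓ]
      field_simp
      norm_num
    exact hratio ▸ natCast_le_of_half_nsmul_le hℓ0 hhalf

/-- Let `H` be an unweighted EDCS(G, β, β(1−λ)) of a bipartite graph `G`,
with `0 < λ < 1` and `ℓ = βλ/6` a positive integer.  Any walk in `G` whose edges alternate
between full and augmentable edges is a simple path of length at most `12/λ + 1`. -/
theorem stmt8 {V : Type*} [Fintype V] (G H : SimpleGraph V)
    (hbip : G.Colorable 2) (hHG : H ≤ G)
    (β : ℕ) (lam : ℝ) (hlam0 : 0 < lam) (hlam1 : lam < 1)
    (ℓ : ℕ) (hℓpos : 0 < ℓ) (hℓ : (ℓ : ℝ) = β * lam / 6)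
    (hP1 : ∀ u v : V, H.Adj u v → sdeg H u + sdeg H v ≤ β)
    (hP2 : ∀ u v : V, G.Adj u v → ¬ H.Adj u v →
      (β : ℝ) * (1 - lam) ≤ (sdeg H u + sdeg H v : ℝ))
    (k : ℕ) (p : ℕ → V)
    (hadj : ∀ i < k, G.Adj (p i) (p (i + 1)))
    (hFD : ∀ i < k, IsFullEdge H β (p i) (p (i + 1)) ∨
      IsAugmentableEdge G H β lam ℓ (p i) (p (i + 1)))
    (halt : ∀ i, i + 1 < k →
      (IsFullEdge H β (p i) (p (i + 1)) →
        IsAugmentableEdge G H β lam ℓ (p (i + 1)) (p (i + 2))) ∧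
      (IsAugmentableEdge G H β lam ℓ (p i) (p (i + 1)) →
        IsFullEdge H β (p (i + 1)) (p (i + 2)))) :
    (∀ i ≤ k, ∀ j ≤ k, p i = p j → i = j) ∧ (k : ℝ) ≤ 12 / lam + 1 :=
  stmt8_general G H hbip β lam ℓ hℓpos hℓ k p hadj hFD halt
end

section
/- Let G be a bipartite graph, let H be an unweighted edge-degree-constrained subgraph EDCS(G, β, β−1), and let G' be obtained from G by inserting a single new edge e. Then there exists an unweighted EDCS(G', β, β−1) H' such that the symmetric difference of H and H' contains at most 4β edges. -/
/-!
Keep the degrees of the old graph as *prescribed* degrees `d`, against which the EDCS conditions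
are measured. If `d a + d b` is too small for the new edge `ab` to be left out, raise `d` by one at
`a`, then at `b`: the repaired subgraph lacks one edge at each of `a` and `b`, and adding `ab` makes
its actual degrees equal to the prescribed ones.

Raising at `a` fails only at an edge `ac` with `d a + d c = β`. Delete it, which leaves `d c` one
too large. Lowering at `c` fails only at a missing edge `cx` with `d c + d x = β⁻`. Insert it, and
`d x` has to be raised. Now `d x < d a` since `β⁻ < β`, so this alternating path has at most
`2 d a + 1` edges, and by bipartiteness it raises on the side of `a` only and lowers on the other
side only.
-/

open SimpleGraph

section

variable {V : Type*} {G H K : SimpleGraph V} {d : V → ℕ} {β γ : ℕ} {a b c u v x : V}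

theorem add_eq_add_of_edge_adj {M : Type*} [AddCommMagma M] (f : V → M)
    (h : (edge a b).Adj u v) : f u + f v = f a + f b := by
  rcases ((edge_adj ..).1 h).1 with ⟨rfl, rfl⟩ | ⟨rfl, rfl⟩
  · rfl
  · exact add_comm _ _

theorem finite_neighborSet_edge (a b v : V) : ((edge a b).neighborSet v).Finite := by
  refine (Set.toFinite {a, b}).subset fun w hw => ?_
  rcases ((edge_adj ..).1 hw).1 with ⟨-, rfl⟩ | ⟨-, rfl⟩ <;> simp

theorem finite_neighborSet_of_le (h : K ≤ H) (hH : (H.neighborSet v).Finite) :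
    (K.neighborSet v).Finite :=
  hH.subset fun _ hw => h hw

theorem finite_neighborSet_sup (hH : (H.neighborSet v).Finite) (hK : (K.neighborSet v).Finite) :
    ((H ⊔ K).neighborSet v).Finite :=
  hH.union hK

theorem sdeg_sup_of_disjoint (hH : (H.neighborSet v).Finite) (hK : (K.neighborSet v).Finite)
    (h : Disjoint H K) : sdeg (H ⊔ K) v = sdeg H v + sdeg K v :=
  Set.ncard_union_eq
    (Set.disjoint_left.2 fun _ hw hw' => (SimpleGraph.disjoint_left.1 h _ _ hw) hw') hH hK

theorem sdeg_edge [DecidableEq V] (hab : a ≠ b) :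
    sdeg (edge a b) = Pi.single a 1 + Pi.single b 1 := by
  funext v
  have hset : (edge a b).neighborSet v = if v = a then {b} else if v = b then {a} else ∅ := by
    ext w
    simp only [mem_neighborSet, edge_adj]
    grind
  rw [sdeg, hset, Pi.add_apply, Pi.single_apply, Pi.single_apply]
  split_ifs <;> simp_all

theorem sdeg_sup_edge [DecidableEq V] (hfin : ∀ v, (H.neighborSet v).Finite) (hab : a ≠ b)
    (h : ¬ H.Adj a b) : sdeg (H ⊔ edge a b) = sdeg H + Pi.single a 1 + Pi.single b 1 := by
  rw [add_assoc, ← sdeg_edge hab]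
  exact funext fun v =>
    sdeg_sup_of_disjoint (hfin v) (finite_neighborSet_edge a b v) ((disjoint_edge H).2 h)

theorem sdeg_sdiff_edge_add [DecidableEq V] (hfin : ∀ v, (H.neighborSet v).Finite)
    (h : H.Adj a b) : sdeg (H \ edge a b) + Pi.single a 1 + Pi.single b 1 = sdeg H := by
  have hfin' (v : V) : ((H \ edge a b).neighborSet v).Finite :=
    finite_neighborSet_of_le sdiff_le (hfin v)
  rw [← sdeg_sup_edge hfin' h.ne (by simp [edge_adj, h.ne]),
    sdiff_sup_cancel ((edge_le_iff H).2 (.inr h))]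

/-- The number of edges in which two graphs differ. -/
noncomputable def editDist (H K : SimpleGraph V) : ℕ∞ :=
  (symmDiff H.edgeSet K.edgeSet).encard

@[simp]
theorem editDist_self (H : SimpleGraph V) : editDist H H = 0 := by
  simp [editDist]

theorem editDist_triangle (H K L : SimpleGraph V) :
    editDist H L ≤ editDist H K + editDist K L :=
  (Set.encard_le_encard (symmDiff_triangle _ _ _)).trans (Set.encard_union_le _ _)

theorem editDist_le_one (hHK : H ≤ K ⊔ edge a b) (hKH : K ≤ H ⊔ edge a b) :
    editDist H K ≤ 1 := by
  have hsub : symmDiff H.edgeSet K.edgeSet ⊆ (edge a b).edgeSet :=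
    symmDiff_le ((edgeSet_mono hHK).trans_eq (edgeSet_sup ..))
      ((edgeSet_mono hKH).trans_eq (edgeSet_sup ..))
  exact (Set.encard_le_encard (hsub.trans edgeSet_edge_subset)).trans_eq (Set.encard_singleton _)

theorem editDist_sup_edge_le_one : editDist H (H ⊔ edge a b) ≤ 1 :=
  editDist_le_one (le_sup_left.trans le_sup_left) le_rfl

theorem editDist_sdiff_edge_le_one : editDist H (H \ edge a b) ≤ 1 :=
  editDist_le_one le_sdiff_sup (sdiff_le.trans le_sup_left)

/-- `H` satisfies the conditions of an EDCS of `G` with parameters `β` and `β⁻ = γ`, measured with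
prescribed degrees `d` in place of the degrees of `H`. Local finiteness is part of the notion, as
`sdeg` is `0` at a vertex of infinite degree. -/
structure IsEDCSWith (G H : SimpleGraph V) (d : V → ℕ) (β γ : ℕ) : Prop where
  finite_neighborSet (v : V) : (H.neighborSet v).Finite
  le : H ≤ G
  add_le (u v : V) : H.Adj u v → d u + d v ≤ β
  le_add (u v : V) : G.Adj u v → ¬ H.Adj u v → γ ≤ d u + d v

/-- `H` is an unweighted edge-degree-constrained subgraph of `G` with parameters `β` and
`β⁻ = γ`. -/
abbrev IsEDCS (G H : SimpleGraph V) (β γ : ℕ) : Prop :=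
  IsEDCSWith G H (sdeg H) β γ

namespace IsEDCSWith

theorem sup_edge_left (hH : IsEDCSWith G H d β γ) (h : γ ≤ d a + d b) :
    IsEDCSWith (G ⊔ edge a b) H d β γ where
  finite_neighborSet := hH.finite_neighborSet
  le := hH.le.trans le_sup_left
  add_le := hH.add_le
  le_add u v huv hn :=
    huv.elim (fun huv => hH.le_add u v huv hn) fun huv => (add_eq_add_of_edge_adj d huv).symm ▸ h

theorem sup_edge (hH : IsEDCSWith G H d β γ) (h : d a + d b ≤ β) :
    IsEDCSWith (G ⊔ edge a b) (H ⊔ edge a b) d β γ where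
  finite_neighborSet v :=
    finite_neighborSet_sup (hH.finite_neighborSet v) (finite_neighborSet_edge a b v)
  le := sup_le_sup_right hH.le _
  add_le u v huv := huv.elim (hH.add_le u v) fun huv => (add_eq_add_of_edge_adj d huv).symm ▸ h
  le_add u v huv hn :=
    huv.elim (fun huv => hH.le_add u v huv fun h => hn (.inl h)) fun huv => (hn (.inr huv)).elim

theorem sdiff_edge (hH : IsEDCSWith G H d β γ) (h : γ ≤ d a + d b) :
    IsEDCSWith G (H \ edge a b) d β γ where
  finite_neighborSet v := finite_neighborSet_of_le sdiff_le (hH.finite_neighborSet v)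
  le := sdiff_le.trans hH.le
  add_le u v huv := hH.add_le u v huv.1
  le_add u v huv hn := by
    by_cases he : (edge a b).Adj u v
    · exact (add_eq_add_of_edge_adj d he).symm ▸ h
    · exact hH.le_add u v huv fun hadj => hn ⟨hadj, he⟩

theorem add_single [DecidableEq V] (hH : IsEDCSWith G H d β γ)
    (h : ∀ c, H.Adj a c → d a + d c < β) : IsEDCSWith G H (d + Pi.single a 1) β γ where
  finite_neighborSet := hH.finite_neighborSet
  le := hH.le
  add_le u v huv := by
    have hne := huv.ne
    have hd := hH.add_le u v huv
    have hu := h u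
    have hv := h v
    have hvu := huv.symm
    simp only [Pi.add_apply, Pi.single_apply]
    grind
  le_add u v huv hn :=
    (hH.le_add u v huv hn).trans (add_le_add (Nat.le_add_right _ _) (Nat.le_add_right _ _))

theorem sub_single [DecidableEq V] (hH : IsEDCSWith G H d β γ)
    (h : ∀ x, G.Adj a x → ¬ H.Adj a x → γ < d a + d x) :
    IsEDCSWith G H (d - Pi.single a 1) β γ where
  finite_neighborSet := hH.finite_neighborSet
  le := hH.le
  add_le u v huv := (add_le_add (Nat.sub_le _ _) (Nat.sub_le _ _)).trans (hH.add_le u v huv)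
  le_add u v huv hn := by
    have hne := huv.ne
    have hd := hH.le_add u v huv hn
    have hu := h u
    have hv := h v
    have hvu := huv.symm
    have hn' : ¬ H.Adj v u := fun hadj => hn hadj.symm
    simp only [Pi.sub_apply, Pi.single_apply]
    grind

theorem exists_swap [DecidableEq V] (hH : IsEDCSWith G H d β γ) (hac : H.Adj a c)
    (hγ : γ ≤ d a + d c) (hcx : G.Adj c x) (hn : ¬ (H \ edge a c).Adj c x)
    (hβ : d c + d x ≤ β) :
    ∃ L, IsEDCSWith G L d β γ ∧ sdeg L + Pi.single a 1 = sdeg H + Pi.single x 1 ∧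
      editDist H L ≤ 2 := by
  have hK := hH.sdiff_edge hγ
  refine ⟨H \ edge a c ⊔ edge c x, sup_edge_of_adj G hcx ▸ hK.sup_edge hβ, ?_, ?_⟩
  · rw [sdeg_sup_edge hK.finite_neighborSet hcx.ne hn,
      ← sdeg_sdiff_edge_add hH.finite_neighborSet hac]
    abel
  · exact (editDist_triangle _ (H \ edge a c) _).trans <|
      (add_le_add editDist_sdiff_edge_le_one editDist_sup_edge_le_one).trans_eq one_add_one_eq_two

/-- It is the excess `d - sdeg H` that grows by `Pi.single a 1`; the terms are moved so that no
truncated subtraction occurs. -/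
theorem exists_raise [DecidableEq V] (hγ : γ < β) (C : G.Coloring (Fin 2))
    (hH : IsEDCSWith G H d β γ) (hdeg : ∀ v, C v ≠ C a → sdeg H v ≤ d v) :
    ∃ H' d', IsEDCSWith G H' d' β γ ∧ d' + sdeg H = d + sdeg H' + Pi.single a 1 ∧
      (∀ v, d' v ≤ d v + if C v = C a then 1 else 0) ∧ editDist H H' ≤ (2 * d a + 1 : ℕ) := by
  induction hk : d a using Nat.strong_induction_on generalizing H a with
  | _ k ih =>
  subst hk
  by_cases hraise : ∀ c, H.Adj a c → d a + d c < β
  · refine ⟨H, d + Pi.single a 1, hH.add_single hraise, by abel, fun v => ?_, by simp⟩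
    simp only [Pi.add_apply, Pi.single_apply]
    grind
  push Not at hraise
  obtain ⟨c, hac, hβ⟩ := hraise
  replace hβ : d a + d c = β := (hH.add_le a c hac).antisymm hβ
  have hCac : C a ≠ C c := C.valid (hH.le hac)
  by_cases hlower : ∀ x, G.Adj c x → ¬ (H \ edge a c).Adj c x → γ < d c + d x
  · have hdegK := congrFun (sdeg_sdiff_edge_add hH.finite_neighborSet hac)
    simp only [Pi.add_apply, Pi.single_apply] at hdegK
    -- The truncated subtraction in `d - Pi.single c 1` is exact.
    have hpos : 1 ≤ d c := le_trans (by grind) (hdeg c hCac.symm)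
    refine ⟨H \ edge a c, d - Pi.single c 1, (hH.sdiff_edge (hβ ▸ hγ.le)).sub_single hlower,
      funext fun v => ?_, fun v => ?_, editDist_sdiff_edge_le_one.trans (by norm_cast; omega)⟩ <;>
    · simp only [Pi.add_apply, Pi.sub_apply, Pi.single_apply]
      grind
  push Not at hlower
  obtain ⟨x, hcx, hn, hx⟩ := hlower
  have hCx : C x = C a := by have := C.valid hcx; omega
  obtain ⟨L, hL, hdegL, hHL⟩ := hH.exists_swap hac (hβ ▸ hγ.le) hcx hn (hx.trans hγ.le)
  replace hdegL := congrFun hdegL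
  simp only [Pi.add_apply, Pi.single_apply] at hdegL
  have hlt : d x < d a := by omega
  have hdegLd : ∀ v, C v ≠ C x → sdeg L v ≤ d v := by grind
  obtain ⟨H', d', hH', hd', hle, hLH'⟩ := ih (d x) hlt hL hdegLd rfl
  refine ⟨H', d', hH', funext fun v => ?_, hCx ▸ hle, ?_⟩
  · have := congrFun hd' v
    simp only [Pi.add_apply, Pi.single_apply] at this ⊢
    grind
  · calc editDist H H' ≤ 2 + (2 * d x + 1 : ℕ) :=
          (editDist_triangle H L H').trans (add_le_add hHL hLH')
      _ ≤ (2 * d a + 1 : ℕ) := by norm_cast; omega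

theorem exists_raise_raise [DecidableEq V] (hγ : γ < β) (C : G.Coloring (Fin 2))
    (hC : C a ≠ C b) (hH : IsEDCSWith G H d β γ) (hdeg : sdeg H ≤ d) :
    ∃ H' d', IsEDCSWith G H' d' β γ ∧
      d' + sdeg H = d + sdeg H' + Pi.single a 1 + Pi.single b 1 ∧
      d' a ≤ d a + 1 ∧ d' b ≤ d b + 1 ∧ editDist H H' ≤ (2 * (d a + d b) + 2 : ℕ) := by
  obtain ⟨H₁, d₁, hH₁, hd₁, hle₁, hdist₁⟩ := hH.exists_raise hγ C (a := a) fun v _ => hdeg v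
  have hdeg₁ (v : V) : sdeg H₁ v ≤ d₁ v := by
    have := congrFun hd₁ v
    have := hdeg v
    simp only [Pi.add_apply] at *
    omega
  obtain ⟨H₂, d₂, hH₂, hd₂, hle₂, hdist₂⟩ := hH₁.exists_raise hγ C (a := b) fun v _ => hdeg₁ v
  have ha₁ := hle₁ a
  have hb₁ := hle₁ b
  have ha₂ := hle₂ a
  have hb₂ := hle₂ b
  simp only [hC, hC.symm, if_true, if_false] at ha₁ hb₁ ha₂ hb₂
  refine ⟨H₂, d₂, hH₂, funext fun v => ?_, by omega, by omega, ?_⟩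
  · have := congrFun hd₁ v
    have := congrFun hd₂ v
    simp only [Pi.add_apply] at *
    omega
  · calc editDist H H₂ ≤ (2 * d a + 1 : ℕ) + (2 * d₁ b + 1 : ℕ) :=
          (editDist_triangle H H₁ H₂).trans (add_le_add hdist₁ hdist₂)
      _ ≤ (2 * (d a + d b) + 2 : ℕ) := by norm_cast; omega

end IsEDCSWith

end

theorem stmt13_general {V : Type*} {G H : SimpleGraph V} {β γ : ℕ} (hH : IsEDCS G H β γ)
    (hγ : γ ≤ β - 1) {a b : V} (hab : a ≠ b) (hnadj : ¬ G.Adj a b)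
    (hbip : (G ⊔ edge a b).IsBipartite) :
    ∃ H', IsEDCS (G ⊔ edge a b) H' β γ ∧ editDist H H' ≤ (2 * β : ℕ) := by
  classical
  by_cases hlow : γ ≤ sdeg H a + sdeg H b
  · exact ⟨H, hH.sup_edge_left hlow, by simp⟩
  obtain ⟨C⟩ := hbip
  have hCab : C a ≠ C b := C.valid (.inr (by simp [edge_adj, hab]))
  obtain ⟨K, d, hK, hd, hda, hdb, hHK⟩ :=
    hH.exists_raise_raise (by omega) (C.comp (.ofLE le_sup_left)) hCab le_rfl
  have hdeg : sdeg (K ⊔ edge a b) = d := by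
    rw [sdeg_sup_edge hK.finite_neighborSet hab fun h => hnadj (hK.le h)]
    exact add_left_cancel (a := sdeg H) (by rw [add_comm _ d, hd]; abel)
  refine ⟨K ⊔ edge a b, by rw [IsEDCS, hdeg]; exact hK.sup_edge (by omega), ?_⟩
  calc editDist H (K ⊔ edge a b)
      ≤ (2 * (sdeg H a + sdeg H b) + 2 : ℕ) + 1 :=
        (editDist_triangle H K _).trans (add_le_add hHK editDist_sup_edge_le_one)
    _ ≤ (2 * β : ℕ) := by norm_cast; omega

/-- Let `H` be an unweighted EDCS(G, β, β−1) of a bipartite graph `G`,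
and let `G'` be obtained from `G` by inserting a new edge `{a, b}`.  Then there is an
unweighted EDCS(G', β, β−1) `H'` whose symmetric difference with `H` has at most `4β`
edges. -/
theorem stmt13 {V : Type*} [Fintype V] (G H : SimpleGraph V)
    (hHG : H ≤ G) (β : ℕ)
    (hP1 : ∀ u v : V, H.Adj u v → sdeg H u + sdeg H v ≤ β)
    (hP2 : ∀ u v : V, G.Adj u v → ¬ H.Adj u v → β - 1 ≤ sdeg H u + sdeg H v)
    (a b : V) (hab : a ≠ b) (hnadj : ¬ G.Adj a b)
    (hbip' : (G ⊔ SimpleGraph.fromEdgeSet {s(a, b)}).Colorable 2) :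
    ∃ H' : SimpleGraph V, H' ≤ G ⊔ SimpleGraph.fromEdgeSet {s(a, b)} ∧
      (∀ u v : V, H'.Adj u v → sdeg H' u + sdeg H' v ≤ β) ∧
      (∀ u v : V, (G ⊔ SimpleGraph.fromEdgeSet {s(a, b)}).Adj u v → ¬ H'.Adj u v →
        β - 1 ≤ sdeg H' u + sdeg H' v) ∧
      (symmDiff H.edgeSet H'.edgeSet).ncard ≤ 4 * β := by
  obtain ⟨H', hH', hdist⟩ :=
    stmt13_general ⟨fun _ => Set.toFinite _, hHG, hP1, hP2⟩ le_rfl hab hnadj hbip'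
  exact ⟨H', hH'.le, hH'.add_le, hH'.le_add, (ENat.toNat_le_of_le_natCast hdist).trans (by omega)⟩
end

section
/- Let G be a bipartite graph, let H be an unweighted edge-degree-constrained subgraph EDCS(G, β, β−1), and let G' be obtained from G by deleting a single edge e of G. Then there exists an unweighted EDCS(G', β, β−1) H' (with H' ⊆ E(G')) such that the symmetric difference of H∖{e} and H' contains at most 4β edges. -/
/-!
Deleting `ab` from `H` lowers the degrees of `a` and `b` by one. Keep using the degrees of `H` as
vertex labels: for these, what is left of `H` is still an EDCS, and the labels exceed the true
degrees by one unit at `a` and one unit at `b`. The two units are discharged one after the other.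

To discharge a unit at `x`, where `d` denotes the labels, drop it. If this violates the lower
bound, then some non-edge `xv` has `d x + d v = β'`, and `xv` is added to the subgraph: this
restores the degree of `x` to `d x`, but raises that of `v` to `d v + 1`. If this now violates the
upper bound, then some edge `vw` has `d v + d w = β`, and `vw` is removed: for the same labels `d`,
the result is again an EDCS, with its single unit of excess at `w`. Since
`d w - d x = β - β' > 0` and an excess at a vertex labelled `β` or more can simply be dropped,
there are at most `β` such exchanges of two edges each.
-/

/-- The number of edges, possibly infinite, in which two graphs on the same vertices differ. -/
noncomputable def edgeDist {V : Type*} (H K : SimpleGraph V) : ℕ∞ :=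
  (symmDiff H.edgeSet K.edgeSet).encard

/-- `H` is an edge-degree-constrained subgraph EDCS(`G`, `β`, `β'`) in which the role of the degrees
is played by arbitrary vertex labels `d`; the usual notion is the case `d = sdeg H`. The degrees are
required to be finite because `sdeg` is zero at vertices of infinite degree. -/
structure IsEDCSWith_s14 {V : Type*} (G H : SimpleGraph V) (β β' : ℕ) (d : V → ℕ) : Prop where
  le : H ≤ G
  finite_neighborSet (v : V) : (H.neighborSet v).Finite
  add_le {u v : V} : H.Adj u v → d u + d v ≤ β
  le_add {u v : V} : G.Adj u v → ¬ H.Adj u v → β' ≤ d u + d v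

section EdgeDist

variable {V : Type*} (H K L : SimpleGraph V) (x y : V)

@[simp]
theorem edgeDist_self : edgeDist H H = 0 := by
  simp [edgeDist]

theorem edgeDist_triangle : edgeDist H L ≤ edgeDist H K + edgeDist K L :=
  (Set.encard_le_encard (symmDiff_triangle _ _ _)).trans (Set.encard_union_le _ _)

theorem edgeDist_sup_edge_le_one : edgeDist H (H ⊔ SimpleGraph.edge x y) ≤ 1 := by
  rw [edgeDist, SimpleGraph.edgeSet_sup, ← Set.encard_singleton s(x, y),
    symmDiff_of_le Set.subset_union_left]
  exact Set.encard_le_encard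
    (Set.sdiff_subset_iff.2 (Set.union_subset_union_right _ SimpleGraph.edgeSet_edge_subset))

theorem edgeDist_deleteEdges_singleton_le_one (e : Sym2 V) :
    edgeDist H (H.deleteEdges {e}) ≤ 1 := by
  rw [edgeDist, SimpleGraph.edgeSet_deleteEdges, ← Set.encard_singleton e,
    symmDiff_of_ge sdiff_le, sdiff_sdiff_right_self]
  exact Set.encard_le_encard Set.inter_subset_right

end EdgeDist

section Degree

variable {V : Type*} {H : SimpleGraph V} {x y : V}

theorem neighborSet_sup_edge_left (hxy : x ≠ y) :
    (H ⊔ SimpleGraph.edge x y).neighborSet x = insert y (H.neighborSet x) := by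
  ext z
  simp only [SimpleGraph.mem_neighborSet, SimpleGraph.sup_adj, SimpleGraph.edge_adj,
    Set.mem_insert_iff]
  grind

theorem neighborSet_sup_edge_of_ne {w : V} (hx : w ≠ x) (hy : w ≠ y) :
    (H ⊔ SimpleGraph.edge x y).neighborSet w = H.neighborSet w := by
  ext z
  simp [SimpleGraph.edge_adj, hx, hy]

theorem finite_neighborSet_sup_edge (hfin : ∀ w, (H.neighborSet w).Finite) (w : V) :
    ((H ⊔ SimpleGraph.edge x y).neighborSet w).Finite := by
  refine ((hfin w).union (Set.toFinite {x, y})).subset fun z hz ↦ ?_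
  simp only [SimpleGraph.mem_neighborSet, SimpleGraph.sup_adj, SimpleGraph.edge_adj] at hz
  grind [SimpleGraph.mem_neighborSet]

theorem finite_neighborSet_deleteEdges (hfin : ∀ w, (H.neighborSet w).Finite) (s : Set (Sym2 V))
    (w : V) : ((H.deleteEdges s).neighborSet w).Finite :=
  (hfin w).subset fun _ hz ↦ SimpleGraph.deleteEdges_le _ hz

theorem deleteEdges_sup_edge (h : H.Adj x y) :
    H.deleteEdges {s(x, y)} ⊔ SimpleGraph.edge x y = H := by
  rw [← SimpleGraph.edgeSet_inj, SimpleGraph.edgeSet_sup, SimpleGraph.edgeSet_deleteEdges,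
    SimpleGraph.edgeSet_edge_of_ne h.ne]
  exact Set.sdiff_union_of_subset (Set.singleton_subset_iff.2 h)

theorem sdeg_sup_edge_left (hfin : (H.neighborSet x).Finite) (hxy : x ≠ y) (h : ¬ H.Adj x y) :
    sdeg (H ⊔ SimpleGraph.edge x y) x = sdeg H x + 1 := by
  rw [sdeg, neighborSet_sup_edge_left hxy, Set.ncard_insert_of_notMem (by simpa using h) hfin,
    sdeg]

variable [DecidableEq V]

theorem sdeg_sup_edge_s14 (hfin : ∀ w, (H.neighborSet w).Finite) (hxy : x ≠ y) (h : ¬ H.Adj x y) :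
    sdeg (H ⊔ SimpleGraph.edge x y) = sdeg H + Pi.single x 1 + Pi.single y 1 := by
  ext w
  by_cases hx : w = x
  · subst hx
    simp [sdeg_sup_edge_left (hfin w) hxy h, hxy]
  by_cases hy : w = y
  · subst hy
    rw [SimpleGraph.edge_comm, sdeg_sup_edge_left (hfin w) hxy.symm (mt SimpleGraph.Adj.symm h)]
    simp [hx]
  · simp [sdeg, neighborSet_sup_edge_of_ne hx hy, hx, hy]

theorem sdeg_deleteEdges_singleton (hfin : ∀ w, (H.neighborSet w).Finite) (h : H.Adj x y) :
    sdeg (H.deleteEdges {s(x, y)}) + Pi.single x 1 + Pi.single y 1 = sdeg H := by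
  rw [← sdeg_sup_edge_s14 (finite_neighborSet_deleteEdges hfin _) h.ne (by simp),
    deleteEdges_sup_edge h]

end Degree

namespace IsEDCSWith_s14

variable {V : Type*} {G H : SimpleGraph V} {β β' : ℕ} {d : V → ℕ} {x y : V}

theorem sup_edge_right (hH : IsEDCSWith_s14 G H β β' d) (hG : G.Adj x y) (hxy : d x + d y ≤ β) :
    IsEDCSWith_s14 G (H ⊔ SimpleGraph.edge x y) β β' d where
  le := sup_le hH.le ((SimpleGraph.edge_le_iff _).2 (.inr hG))
  finite_neighborSet := finite_neighborSet_sup_edge hH.finite_neighborSet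
  add_le := by
    rintro u v (huv | huv)
    · exact hH.add_le huv
    · grind
  le_add huv hn := hH.le_add huv fun h ↦ hn (.inl h)

theorem deleteEdges_singleton_right (hH : IsEDCSWith_s14 G H β β' d) (hxy : β' ≤ d x + d y) :
    IsEDCSWith_s14 G (H.deleteEdges {s(x, y)}) β β' d where
  le := (SimpleGraph.deleteEdges_le _).trans hH.le
  finite_neighborSet := finite_neighborSet_deleteEdges hH.finite_neighborSet _
  add_le huv := hH.add_le (SimpleGraph.deleteEdges_le _ huv)
  le_add {u v} huv hn := by
    by_cases h : H.Adj u v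
    · have : s(u, v) = s(x, y) := by
        by_contra hne
        exact hn (SimpleGraph.deleteEdges_adj.2 ⟨h, hne⟩)
      grind
    · exact hH.le_add huv h

theorem deleteEdges (hH : IsEDCSWith_s14 G H β β' d) (s : Set (Sym2 V)) :
    IsEDCSWith_s14 (G.deleteEdges s) (H.deleteEdges s) β β' d where
  le := SimpleGraph.deleteEdges_mono hH.le
  finite_neighborSet := finite_neighborSet_deleteEdges hH.finite_neighborSet _
  add_le huv := hH.add_le (SimpleGraph.deleteEdges_le _ huv)
  le_add huv hn := by
    rw [SimpleGraph.deleteEdges_adj] at huv hn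
    exact hH.le_add huv.1 fun h ↦ hn ⟨h, huv.2⟩

variable [DecidableEq V]

theorem exists_tight_nonedge {d₀ : V → ℕ} (hH : IsEDCSWith_s14 G H β β' d)
    (hd : d = d₀ + Pi.single x 1) (hd₀ : ¬ IsEDCSWith_s14 G H β β' d₀) :
    ∃ v, G.Adj x v ∧ ¬ H.Adj x v ∧ d x + d v = β' := by
  have hle (z : V) : d₀ z ≤ d z := by simp [hd]
  obtain ⟨u, v, hG, hn, hlt⟩ : ∃ u v, G.Adj u v ∧ ¬ H.Adj u v ∧ d₀ u + d₀ v < β' := by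
    by_contra! hcon
    exact hd₀ ⟨hH.le, hH.finite_neighborSet,
      fun huv ↦ (add_le_add (hle _) (hle _)).trans (hH.add_le huv), hcon _ _⟩
  have hge := hH.le_add hG hn
  have hd' (z : V) : d z = d₀ z + if z = x then 1 else 0 := by simp [hd, Pi.single_apply]
  have hne := hG.ne
  rcases eq_or_ne u x with rfl | hu
  · exact ⟨v, hG, hn, by grind⟩
  · obtain rfl : v = x := by grind
    exact ⟨u, hG.symm, mt SimpleGraph.Adj.symm hn, by grind⟩

theorem exists_tight_edge (hH : IsEDCSWith_s14 G H β β' d)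
    (hd : ¬ IsEDCSWith_s14 G H β β' (d + Pi.single x 1)) :
    ∃ w, H.Adj x w ∧ d x + d w = β := by
  have hle (z : V) : d z ≤ (d + Pi.single x 1 : V → ℕ) z := by simp
  obtain ⟨u, w, hadj, hlt⟩ : ∃ u w, H.Adj u w ∧
      β < (d + Pi.single x 1 : V → ℕ) u + (d + Pi.single x 1 : V → ℕ) w := by
    by_contra! hcon
    exact hd ⟨hH.le, hH.finite_neighborSet, hcon _ _,
      fun huv hn ↦ (hH.le_add huv hn).trans (add_le_add (hle _) (hle _))⟩
  have hub := hH.add_le hadj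
  have hne := hadj.ne
  simp only [Pi.add_apply, Pi.single_apply] at hlt
  rcases eq_or_ne u x with rfl | hu
  · exact ⟨w, hadj, by grind⟩
  · obtain rfl : w = x := by grind
    exact ⟨u, hadj.symm, by grind⟩

variable {c : V → ℕ}

theorem exists_add_tight_edge (hβ : β' ≤ β) (hH : IsEDCSWith_s14 G H β β' d)
    (hd : d = sdeg H + c + Pi.single x 1) (hdrop : ¬ IsEDCSWith_s14 G H β β' (sdeg H + c)) :
    ∃ K v, IsEDCSWith_s14 G K β β' d ∧ sdeg K + c = d + Pi.single v 1 ∧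
      edgeDist H K ≤ 1 ∧ d x + d v = β' := by
  obtain ⟨v, hG, hxv, htight⟩ := hH.exists_tight_nonedge hd hdrop
  refine ⟨H ⊔ SimpleGraph.edge x v, v, hH.sup_edge_right hG (htight.trans_le hβ), ?_,
    edgeDist_sup_edge_le_one H x v, htight⟩
  rw [sdeg_sup_edge_s14 hH.finite_neighborSet hG.ne hxv, hd]
  abel

theorem exists_delete_tight_edge (hβ : β' ≤ β) (hH : IsEDCSWith_s14 G H β β' d)
    (hd : sdeg H + c = d + Pi.single x 1) (hraise : ¬ IsEDCSWith_s14 G H β β' (sdeg H + c)) :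
    ∃ K w, IsEDCSWith_s14 G K β β' d ∧ d = sdeg K + c + Pi.single w 1 ∧
      edgeDist H K ≤ 1 ∧ d x + d w = β := by
  obtain ⟨w, hxw, htight⟩ := hH.exists_tight_edge (hd ▸ hraise)
  refine ⟨H.deleteEdges {s(x, w)}, w, hH.deleteEdges_singleton_right (hβ.trans_eq htight.symm),
    ?_, edgeDist_deleteEdges_singleton_le_one H _, htight⟩
  rw [← sdeg_deleteEdges_singleton hH.finite_neighborSet hxw] at hd
  refine add_right_cancel (b := Pi.single x 1) (hd.symm.trans ?_)
  abel

/-- `c` is an excess left in place: it lets the two units be discharged one after the other. -/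
theorem exists_discharge (hβ : β' < β) (n : ℕ) (hH : IsEDCSWith_s14 G H β β' d)
    (hd : d = sdeg H + c + Pi.single x 1) (hn : β ≤ d x + n) :
    ∃ H', IsEDCSWith_s14 G H' β β' (sdeg H' + c) ∧ edgeDist H H' ≤ 2 * n := by
  induction n generalizing H x with
  | zero =>
    refine ⟨H, ?_, by simp⟩
    by_contra hdrop
    obtain ⟨-, v, -, -, -, hxv⟩ := hH.exists_add_tight_edge hβ.le hd hdrop
    omega
  | succ n ih =>
    by_cases hdrop : IsEDCSWith_s14 G H β β' (sdeg H + c)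
    · exact ⟨H, hdrop, by simp⟩
    obtain ⟨K, v, hK, hdK, hHK, hxv⟩ := hH.exists_add_tight_edge hβ.le hd hdrop
    by_cases hraise : IsEDCSWith_s14 G K β β' (sdeg K + c)
    · exact ⟨K, hraise, hHK.trans (mod_cast (by omega : 1 ≤ 2 * (n + 1)))⟩
    obtain ⟨L, w, hL, hdL, hKL, hvw⟩ := hK.exists_delete_tight_edge hβ.le hdK hraise
    obtain ⟨H', hH', hLH'⟩ := ih hL hdL (by omega)
    refine ⟨H', hH', ?_⟩
    calc edgeDist H H'
      _ ≤ edgeDist H K + (edgeDist K L + edgeDist L H') :=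
        (edgeDist_triangle H K H').trans (by gcongr; exact edgeDist_triangle K L H')
      _ ≤ 1 + (1 + 2 * n) := by gcongr
      _ = 2 * (n + 1 : ℕ) := by push_cast; ring

end IsEDCSWith_s14

theorem stmt14_general {V : Type*} {G H : SimpleGraph V} {β β' : ℕ} (hβ : β' ≤ β - 1)
    (hH : IsEDCSWith_s14 G H β β' (sdeg H)) (a b : V) :
    ∃ H', IsEDCSWith_s14 (G.deleteEdges {s(a, b)}) H' β β' (sdeg H') ∧
      edgeDist (H.deleteEdges {s(a, b)}) H' ≤ 4 * β := by
  classical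
  have hstart := hH.deleteEdges {s(a, b)}
  by_cases hab : H.Adj a b
  · have hdeg := sdeg_deleteEdges_singleton hH.finite_neighborSet hab
    have hpos : 0 < sdeg H a := (Set.ncard_pos (hH.finite_neighborSet a)).2 ⟨b, hab⟩
    have hβ' : β' < β := by
      have := hH.add_le hab
      omega
    obtain ⟨K, hK, hHK⟩ := hstart.exists_discharge (x := a) (c := Pi.single b 1) hβ' β
      (by rw [← hdeg, add_right_comm]) (Nat.le_add_left _ _)
    obtain ⟨H', hH', hKH'⟩ := hK.exists_discharge (c := 0) hβ' β (by rw [add_zero])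
      (Nat.le_add_left _ _)
    refine ⟨H', by simpa only [add_zero] using hH', ?_⟩
    calc edgeDist (H.deleteEdges {s(a, b)}) H'
      _ ≤ 2 * β + 2 * β := (edgeDist_triangle _ K _).trans (add_le_add hHK hKH')
      _ = 4 * β := by ring
  · have hdel : H.deleteEdges {s(a, b)} = H :=
      SimpleGraph.deleteEdges_eq_self.2 (by simpa using hab)
    rw [hdel] at hstart ⊢
    exact ⟨H, hstart, by simp⟩

/-- Let `H` be an unweighted EDCS(G, β, β−1) of a bipartite graph `G`,
and let `G'` be obtained from `G` by deleting the edge `{a, b}` of `G`.  Then there is an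
unweighted EDCS(G', β, β−1) `H'` whose symmetric difference with `H ∖ {a, b}` has at most
`4β` edges. -/
theorem stmt14 {V : Type*} [Fintype V] (G H : SimpleGraph V)
    (hbip : G.Colorable 2) (hHG : H ≤ G) (β : ℕ)
    (hP1 : ∀ u v : V, H.Adj u v → sdeg H u + sdeg H v ≤ β)
    (hP2 : ∀ u v : V, G.Adj u v → ¬ H.Adj u v → β - 1 ≤ sdeg H u + sdeg H v)
    (a b : V) (hadj : G.Adj a b) :
    ∃ H' : SimpleGraph V, H' ≤ G.deleteEdges {s(a, b)} ∧
      (∀ u v : V, H'.Adj u v → sdeg H' u + sdeg H' v ≤ β) ∧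
      (∀ u v : V, (G.deleteEdges {s(a, b)}).Adj u v → ¬ H'.Adj u v →
        β - 1 ≤ sdeg H' u + sdeg H' v) ∧
      (symmDiff (H.deleteEdges {s(a, b)}).edgeSet H'.edgeSet).ncard ≤ 4 * β := by
  obtain ⟨H', hH', hcard⟩ := stmt14_general le_rfl
    ⟨hHG, fun _ ↦ Set.toFinite _, hP1 _ _, hP2 _ _⟩ a b
  exact ⟨H', hH'.le, fun _ _ ↦ hH'.add_le, fun _ _ ↦ hH'.le_add,
    ENat.toNat_le_of_le_natCast (mod_cast hcard)⟩
end
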